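/- Assume q < |a_1⋯a_{n+1} b_1⋯b_{n+1}|, and let x, y ∈ (ℂ^*)ⁿ both satisfy the nondegeneracy conditions: x_i/x_j ∉ qᶻ for 1 ≤ i < j ≤ n, and x_i · (x_1⋯x_n) · d⁻¹ ∉ qᶻ for 1 ≤ i ≤ n (and the same with y in place of x). Then the regularized Gustafson sum is independent of the base point: 𝒦(x) = 𝒦(y). (Lemma 5.1 of the paper: 𝒦 is a constant.) -/

import Mathlib

/-!
Put `N = n + 1`, let `X` be the point `x` completed by the coordinate `d / ∏ x_k`, and let
`Θ(z) = ∏_{i<j} z_j θ(z_i/z_j)` with `θ(u) = (u)_∞ (q/u)_∞` (`bigTheta`). Since `Θ` is the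
Vandermonde determinant times the denominator of the summand, its quasi-periodicity
(`bigTheta_shift`) shows that the summand at `ν` equals `Θ(X)⁻¹` times the determinant of the matrix
`latTerm k (X_i) (ν_i)`, where `ν` is completed to a vector of total degree `∑ ν_i = 0`
(`gRegTerm_eq`).

The restriction `∑ ν_i = 0` is encoded by an auxiliary variable `w`. The sum over all of `ℤ^N` with
weight `w^{∑ ν_i}` is `D(X; w) = det (f_k(X_i))`, where `f_k(x) = ∑_m w^m latTerm k x m`
(`latSum`). These series converge absolutely for `|q| / |∏ a_i| < |w| < |∏ b_i|`, an annulus which is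
nonempty precisely because of the hypothesis on `∏ a_i ∏ b_i`, and each `f_k` is a holomorphic
function on `ℂ^*` with `f(qx) = w⁻¹ x^{-N} f(x)`.

Such functions are rigid: if `N` points `p_i`, distinct modulo `q^ℤ`, are zeros of one of them and
`w ∏ (-p_i)` is not a power of `q`, it vanishes identically (`eq_zero_of_theta_zeros`); dividing by
`∏ θ(x/p_i)` reduces this to Liouville's theorem (`eq_zero_of_multiplier`). Applied to one variable
at a time, this shows that `D(X; w)` is proportional to `Θ(X) θ(w ∏ (-X_i))`
(`ptDet_mul_refTheta`). For two points with the same product of coordinates `d` the last factor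
cancels, so `D(X; w) Θ(Y) = D(Y; w) Θ(X)` on a circle `|w| = r` which avoids the zeros of that factor.
Comparing constant terms in `w` (`tsum_constant_term_eq_zero`) gives the equality of the two sums.
-/

open scoped BigOperators
open Finset

/-- The infinite q-Pochhammer symbol `(a)_∞ = ∏_{i=0}^∞ (1 - qⁱ a)`. -/
noncomputable def qp (q a : ℂ) : ℂ := ∏' i : ℕ, (1 - q ^ i * a)

/-- The point `z = (x₁qᵛ¹,…,x_nqᵛⁿ, d z₁⁻¹⋯z_n⁻¹)` of the Gustafson lattice. -/
noncomputable def gz {n : ℕ} (q d : ℂ) (x : Fin n → ℂ) (ν : Fin n → ℤ) : Fin (n + 1) → ℂ :=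
  Fin.snoc (fun k => x k * q ^ ν k) (d * (∏ k, x k * q ^ ν k)⁻¹)

/-- Summand of the regularized Jackson integral of Gustafson's `A_n` type. -/
noncomputable def gRegTerm {n : ℕ} (q d : ℂ) (a b : Fin (n + 1) → ℂ) (x : Fin n → ℂ)
    (ν : Fin n → ℤ) : ℂ :=
  (∏ i, ∏ j, qp q (q * (a j)⁻¹ * gz q d x ν i) * qp q (q * (b j)⁻¹ * (gz q d x ν i)⁻¹)) /
    ∏ i, ∏ j ∈ Finset.Ioi i, qp q (q * gz q d x ν i / gz q d x ν j) *
      qp q (q * gz q d x ν j / gz q d x ν i)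

/-- The regularized Jackson integral of Gustafson's `A_n` type `𝒦(x)`. -/
noncomputable def gReg {n : ℕ} (q d : ℂ) (a b : Fin (n + 1) → ℂ) (x : Fin n → ℂ) : ℂ :=
  (1 - q) ^ n * ∑' ν : Fin n → ℤ, gRegTerm q d a b x ν

/-! ### The infinite q-Pochhammer symbol and the theta function -/

section qPochhammer

variable {q : ℂ}

lemma summable_norm_qp (hq : ‖q‖ < 1) (y : ℂ) : Summable fun i : ℕ => ‖-(q ^ i * y)‖ := by
  simpa using (summable_geometric_of_lt_one (norm_nonneg q) hq).mul_right ‖y‖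

lemma multipliable_qp (hq : ‖q‖ < 1) (y : ℂ) : Multipliable fun i : ℕ => (1 - q ^ i * y) := by
  simpa [sub_eq_add_neg] using multipliable_one_add_of_summable (summable_norm_qp hq y)

lemma differentiable_qp (hq : ‖q‖ < 1) : Differentiable ℂ (qp q) := by
  intro y
  have hd : DifferentiableOn ℂ (fun y => ∏' i : ℕ, (1 + -(q ^ i * y)))
      (Metric.ball (0 : ℂ) (‖y‖ + 1)) := by
    refine (Summable.hasProdLocallyUniformlyOn_nat_one_add (f := fun i y => -(q ^ i * y))
      (u := fun i => ‖q‖ ^ i * (‖y‖ + 1)) Metric.isOpen_ball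
      ((summable_geometric_of_lt_one (norm_nonneg q) hq).mul_right _)
      (.of_forall fun i z hz => ?_) (fun i => by fun_prop)).differentiableOn
      (.of_forall fun _ => by
        simpa [Finset.prod_fn] using DifferentiableOn.finsetProd (fun _ _ => by fun_prop))
      Metric.isOpen_ball
    simp only [Metric.mem_ball, dist_zero_right] at hz
    simp only [norm_neg, norm_mul, norm_pow]
    gcongr
  have := hd.differentiableAt (Metric.isOpen_ball.mem_nhds (by simp : y ∈ _))
  have he : qp q = fun y => ∏' i : ℕ, (1 + -(q ^ i * y)) := by
    funext y; simp [qp, sub_eq_add_neg]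
  rwa [he]

/-- Peeling off the first factor: `(y)_∞ = (1 - y) (qy)_∞`. -/
lemma qp_step (hq : ‖q‖ < 1) (y : ℂ) : qp q y = (1 - y) * qp q (q * y) := by
  unfold qp
  rw [tprod_eq_zero_mul']
  · simp [pow_succ, mul_assoc]
  · simpa [pow_succ, mul_assoc] using multipliable_qp hq (q * y)

lemma qp_ne_zero (hq : ‖q‖ < 1) {y : ℂ} (h : ∀ i : ℕ, q ^ i * y ≠ 1) : qp q y ≠ 0 := by
  have := tprod_one_add_ne_zero_of_summable (f := fun i : ℕ => -(q ^ i * y))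
    (fun i => by rw [← sub_eq_add_neg, sub_ne_zero]; exact (h i).symm) (summable_norm_qp hq y)
  simpa [qp, sub_eq_add_neg] using this

lemma norm_qp_prod_le (hq : ‖q‖ < 1) (y : ℂ) (s : Finset ℕ) :
    ‖∏ i ∈ s, (1 - q ^ i * y)‖ ≤ Real.exp (‖y‖ / (1 - ‖q‖)) := by
  rw [norm_prod]
  calc ∏ i ∈ s, ‖1 - q ^ i * y‖ ≤ ∏ i ∈ s, Real.exp (‖q‖ ^ i * ‖y‖) := by
        refine prod_le_prod (fun _ _ => norm_nonneg _) fun i _ => ?_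
        refine (norm_sub_le _ _).trans ?_
        rw [norm_one, norm_mul, norm_pow, add_comm]
        exact Real.add_one_le_exp _
    _ = Real.exp (∑ i ∈ s, ‖q‖ ^ i * ‖y‖) := (Real.exp_sum _ _).symm
    _ ≤ _ := by
        refine Real.exp_le_exp.2 ?_
        have hs := (summable_geometric_of_lt_one (norm_nonneg q) hq).mul_right ‖y‖
        refine (hs.sum_le_tsum s (fun _ _ => by positivity)).trans ?_
        rw [tsum_mul_right, tsum_geometric_of_lt_one (norm_nonneg q) hq, div_eq_inv_mul]

lemma norm_qp_le (hq : ‖q‖ < 1) (y : ℂ) : ‖qp q y‖ ≤ Real.exp (‖y‖ / (1 - ‖q‖)) :=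
  le_of_tendsto (multipliable_qp hq y).hasProd.norm (.of_forall fun s => by
    simpa only [norm_prod] using norm_qp_prod_le hq y s)

end qPochhammer

section Theta

variable {q : ℂ}

/-- The multiplicative theta function `θ(u) = (u)_∞ (q/u)_∞`. -/
noncomputable def qtheta (q u : ℂ) : ℂ := qp q u * qp q (q / u)

lemma qtheta_eq (hq : ‖q‖ < 1) (u : ℂ) :
    qtheta q u = (1 - u) * (qp q (q * u) * qp q (q / u)) := by
  rw [qtheta, qp_step hq u, mul_assoc]

lemma qtheta_mul_q (hq0 : q ≠ 0) (hq : ‖q‖ < 1) {u : ℂ} (hu : u ≠ 0) :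
    qtheta q (q * u) = -u⁻¹ * qtheta q u := by
  rw [qtheta_eq hq u, qtheta, show q / (q * u) = u⁻¹ by field_simp, qp_step hq u⁻¹,
    ← div_eq_mul_inv q u]
  field_simp
  ring

lemma qtheta_div_q (hq0 : q ≠ 0) (hq : ‖q‖ < 1) {u : ℂ} (hu : u ≠ 0) :
    qtheta q (u / q) = -(u / q) * qtheta q u := by
  have := qtheta_mul_q hq0 hq (div_ne_zero hu hq0)
  rw [mul_div_cancel₀ _ hq0] at this
  rw [this]; field_simp

lemma qtheta_ne_zero (hq : ‖q‖ < 1) {u : ℂ} (hu : u ≠ 0)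
    (h : ∀ m : ℤ, u ≠ q ^ m) : qtheta q u ≠ 0 := by
  refine mul_ne_zero (qp_ne_zero hq fun i hi => h (-i) ?_) (qp_ne_zero hq fun i hi => h (i + 1) ?_)
  · rw [zpow_neg, zpow_natCast]; exact eq_inv_of_mul_eq_one_right hi
  · rw [← Nat.cast_succ, zpow_natCast, pow_succ]
    field_simp at hi
    rw [← hi]

lemma qtheta_zpow (hq0 : q ≠ 0) (hq : ‖q‖ < 1) (m : ℤ) : qtheta q (q ^ m) = 0 := by
  induction m with
  | zero => simp [qtheta_eq hq]
  | succ i ih =>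
    rw [zpow_add_one₀ hq0, mul_comm, qtheta_mul_q hq0 hq (zpow_ne_zero _ hq0), ih, mul_zero]
  | pred i ih =>
    rw [zpow_sub_one₀ hq0, ← div_eq_mul_inv, qtheta_div_q hq0 hq (zpow_ne_zero _ hq0), ih, mul_zero]

lemma differentiableAt_qtheta (hq : ‖q‖ < 1) {u : ℂ} (hu : u ≠ 0) :
    DifferentiableAt ℂ (qtheta q) u := by
  have h := differentiable_qp hq
  exact (h u).mul ((h _).comp u (by fun_prop (disch := exact hu)))

/-- The zeros `qᵐ` of `θ` are simple. -/
lemma deriv_qtheta_ne_zero (hq0 : q ≠ 0) (hq : ‖q‖ < 1) (m : ℤ) :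
    deriv (qtheta q) (q ^ m) ≠ 0 := by
  -- Differentiating `θ(qu) = -u⁻¹ θ(u)` at a zero relates the derivatives at `qᵐ` and `qᵐ⁺¹`.
  have key : ∀ m : ℤ, q * deriv (qtheta q) (q ^ (m + 1)) =
      -(q ^ m)⁻¹ * deriv (qtheta q) (q ^ m) := by
    intro m
    have hm : q ^ m ≠ 0 := zpow_ne_zero _ hq0
    have h1 : HasDerivAt (fun u => qtheta q (q * u)) (deriv (qtheta q) (q * q ^ m) * (q * 1))
        (q ^ m) :=
      (differentiableAt_qtheta hq (mul_ne_zero hq0 hm)).hasDerivAt.comp (q ^ m)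
        ((hasDerivAt_id (q ^ m)).const_mul q)
    have h2 : HasDerivAt (fun u => -u⁻¹ * qtheta q u) _ (q ^ m) :=
      (hasDerivAt_inv hm).neg.mul (differentiableAt_qtheta hq hm).hasDerivAt
    have h3 := h1.unique (h2.congr_of_eventuallyEq (by
      filter_upwards [isOpen_ne.mem_nhds hm] with u hu using qtheta_mul_q hq0 hq hu))
    rw [qtheta_zpow hq0 hq, mul_zero, zero_add, mul_one] at h3
    rw [zpow_add_one₀ hq0, mul_comm (q ^ m) q, mul_comm, h3]
    simp
  induction m with
  | zero =>
    have hη : DifferentiableAt ℂ (fun u => qp q (q * u) * qp q (q / u)) 1 := by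
      have h := differentiable_qp hq
      exact ((h _).comp (1 : ℂ) (by fun_prop)).mul
        ((h _).comp (1 : ℂ) (by fun_prop (disch := norm_num)))
    have h1 : HasDerivAt (fun u => (1 - u) * (qp q (q * u) * qp q (q / u))) _ 1 :=
      ((hasDerivAt_id (1 : ℂ)).const_sub 1).mul hη.hasDerivAt
    have hqq : qp q q ≠ 0 := qp_ne_zero hq fun i hi => by
      have : ‖q‖ ^ (i + 1) = 1 := by rw [← norm_pow, pow_succ, hi, norm_one]
      exact (pow_lt_one₀ (norm_nonneg q) hq (Nat.succ_ne_zero i)).ne this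
    rw [zpow_zero, show qtheta q = _ from funext (qtheta_eq hq), h1.deriv]
    simpa using hqq
  | succ i ih =>
    intro h0
    have := key i
    rw [h0, mul_zero] at this
    exact mul_ne_zero (neg_ne_zero.2 (inv_ne_zero (zpow_ne_zero _ hq0))) ih this.symm
  | pred i ih =>
    intro h0
    have := key (-i - 1)
    rw [h0, mul_zero, sub_add_cancel] at this
    exact mul_ne_zero hq0 ih this

end Theta

/-! ### Rigidity of theta functions in one variable -/

section Rigidity

open Filter Topology

variable {q : ℂ}

/-- A holomorphic function vanishing at all zeros of `t`, where these are simple, is divisible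
by `t`. -/
lemma exists_holomorphic_quotient {U : Set ℂ} (hU : IsOpen U) {f t : ℂ → ℂ}
    (hf : DifferentiableOn ℂ f U) (ht : DifferentiableOn ℂ t U)
    (h : ∀ p ∈ U, t p = 0 → f p = 0 ∧ deriv t p ≠ 0) :
    ∃ g : ℂ → ℂ, DifferentiableOn ℂ g U ∧ ∀ x ∈ U, f x = t x * g x := by
  classical
  refine ⟨fun x => if t x = 0 then deriv f x / deriv t x else f x / t x, fun p hp => ?_,
    fun x hx => ?_⟩
  · have hpU := hU.mem_nhds hp
    have htp := ht.differentiableAt hpU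
    have hfp := hf.differentiableAt hpU
    refine DifferentiableAt.differentiableWithinAt ?_
    by_cases h0 : t p = 0
    · obtain ⟨hf0, hd0⟩ := h p hp h0
      -- Near a zero `p` of `t` the quotient of the two difference quotients at `p` is the
      -- required extension of `f / t`.
      have hft : DifferentiableAt ℂ (dslope f p) p :=
        (((Complex.differentiableOn_dslope hpU).2 hf).differentiableAt hpU)
      have htt : DifferentiableAt ℂ (dslope t p) p :=
        (((Complex.differentiableOn_dslope hpU).2 ht).differentiableAt hpU)
      refine (hft.div htt (by rwa [dslope_same])).congr_of_eventuallyEq ?_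
      have hne : ∀ᶠ x in 𝓝[≠] p, t x ≠ 0 := htp.hasDerivAt.eventually_ne hd0
      rw [eventually_nhdsWithin_iff] at hne
      filter_upwards [hne] with x hx
      by_cases hxp : x = p
      · subst hxp
        simp [h0, dslope_same]
      · have := hx hxp
        have hsub : x - p ≠ 0 := sub_ne_zero.2 hxp
        simp only [this, if_false, Pi.div_apply, dslope_of_ne _ hxp, slope_def_field, hf0, h0,
          sub_zero]
        field_simp
    · refine (hfp.div htp h0).congr_of_eventuallyEq ?_
      filter_upwards [htp.continuousAt.eventually_ne h0] with x hx
      simp [hx]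
  · by_cases h0 : t x = 0
    · simp [h0, (h x hx h0).1]
    · simp only [h0, if_false]
      field_simp

/-- A holomorphic function on `ℂ^*` with `k(qx) = λ k(x)` vanishes unless `λ` is a power of `q`:
after multiplying by a power of `x` one may assume `|q| < |λ| ≤ 1`, so that `k` extends to an
entire function vanishing at `0` for which `k(x)/x` is bounded, hence constant. -/
lemma eq_zero_of_multiplier (hq0 : q ≠ 0) (hq : ‖q‖ < 1) {k : ℂ → ℂ} {l : ℂ} (hl0 : l ≠ 0)
    (hl : ∀ m : ℤ, l ≠ q ^ m) (hk : DifferentiableOn ℂ k {0}ᶜ)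
    (hkq : ∀ x, x ≠ 0 → k (q * x) = l * k x) (x : ℂ) (hx : x ≠ 0) : k x = 0 := by
  have hqn : 0 < ‖q‖ := norm_pos_iff.2 hq0
  have hqi : 1 < ‖q‖⁻¹ := (one_lt_inv₀ hqn).2 hq
  obtain ⟨m, hm1, hm2⟩ := exists_mem_Ioc_zpow (norm_pos_iff.2 hl0) hqi
  set ρ : ℂ := l * q ^ (m + 1) with hρ
  have hρ1 : ‖ρ‖ ≤ 1 := by
    rw [hρ, norm_mul, norm_zpow]
    calc ‖l‖ * ‖q‖ ^ (m + 1) ≤ ‖q‖⁻¹ ^ (m + 1) * ‖q‖ ^ (m + 1) := by gcongr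
      _ = 1 := by rw [← mul_zpow, inv_mul_cancel₀ hqn.ne', one_zpow]
  have hρ2 : ‖q‖ < ‖ρ‖ := by
    rw [hρ, norm_mul, norm_zpow, zpow_add_one₀ hqn.ne', ← mul_assoc]
    have : 1 < ‖l‖ * ‖q‖ ^ m := by
      calc 1 = ‖q‖⁻¹ ^ m * ‖q‖ ^ m := by rw [← mul_zpow, inv_mul_cancel₀ hqn.ne', one_zpow]
        _ < _ := by gcongr
    nlinarith
  have hρne : ρ ≠ 1 := fun h => hl (-(m + 1)) (by
    rw [zpow_neg]; exact eq_inv_of_mul_eq_one_left h)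
  set κ : ℂ → ℂ := fun x => k x * x ^ (m + 1) with hκ
  have hκd : DifferentiableOn ℂ κ {0}ᶜ := hk.mul fun y hy =>
    (differentiableAt_zpow.2 (Or.inl hy)).differentiableWithinAt
  have hκq : ∀ x, x ≠ 0 → κ (q * x) = ρ * κ x := fun x hx => by
    simp only [hκ, hρ, hkq x hx, mul_zpow]; ring
  have hκj : ∀ (j : ℕ) (x : ℂ), x ≠ 0 → κ (q ^ j * x) = ρ ^ j * κ x := by
    intro j x hx
    induction j with
    | zero => simp
    | succ j ih => rw [pow_succ', mul_assoc, hκq _ (by positivity), ih, pow_succ']; ring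
  -- a bound for `κ` on the fundamental annulus `|q| ≤ |y| ≤ |q|⁻¹`
  have hcomp : IsCompact (Metric.closedBall (0 : ℂ) ‖q‖⁻¹ \ Metric.ball 0 ‖q‖) :=
    (isCompact_closedBall _ _).diff Metric.isOpen_ball
  obtain ⟨M, hM⟩ := hcomp.exists_bound_of_continuousOn (f := κ)
    (hκd.continuousOn.mono fun y hy => by
      simp only [Set.mem_sdiff, Metric.mem_ball, dist_zero_right, not_lt] at hy
      exact norm_pos_iff.1 (hqn.trans_le hy.2))
  have hM' : ∀ y : ℂ, ‖q‖ ≤ ‖y‖ → ‖y‖ ≤ ‖q‖⁻¹ → ‖κ y‖ ≤ M := fun y h1 h2 =>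
    hM y (by simp [h1, h2])
  have hM0 : 0 ≤ M := (norm_nonneg _).trans (hM' 1 (by simpa using hq.le) (by simpa using hqi.le))
  have hsmall : ∀ x : ℂ, x ≠ 0 → ‖x‖ ≤ 1 → ‖κ x‖ ≤ M := by
    intro x hx hx1
    obtain ⟨j, hj1, hj2⟩ := exists_nat_pow_near_of_lt_one (norm_pos_iff.2 hx) hx1 hqn hq
    have hxe : q ^ j * (x / q ^ j) = x := by field_simp
    rw [← hxe, hκj j _ (by positivity), norm_mul, norm_pow]
    have hb : ‖κ (x / q ^ j)‖ ≤ M := by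
      refine hM' _ ?_ ?_
      · rw [norm_div, norm_pow, le_div_iff₀ (by positivity), ← pow_succ']
        exact hj1.le
      · rw [norm_div, norm_pow]
        exact ((div_le_one (by positivity)).2 hj2).trans hqi.le
    calc ‖ρ‖ ^ j * ‖κ (x / q ^ j)‖ ≤ 1 * M := by
          gcongr; exact pow_le_one₀ (norm_nonneg _) hρ1
      _ = M := one_mul M
  have hlarge : ∀ x : ℂ, 1 ≤ ‖x‖ → ‖κ x‖ ≤ M * ‖x‖ := by
    intro x hx1
    have hx : x ≠ 0 := norm_pos_iff.1 (by linarith)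
    obtain ⟨j, hj1, hj2⟩ := exists_nat_pow_near hx1 hqi
    rw [inv_pow] at hj1
    rw [inv_pow, pow_succ] at hj2
    have hqj : 0 < ‖q‖ ^ j := by positivity
    have hb : ‖κ (q ^ j * x)‖ ≤ M := by
      refine hM' _ ?_ ?_
      · rw [norm_mul, norm_pow]
        have : 1 ≤ ‖q‖ ^ j * ‖x‖ := by
          rwa [inv_le_iff_one_le_mul₀' hqj] at hj1
        linarith
      · rw [norm_mul, norm_pow]
        rw [mul_inv, ← div_eq_inv_mul, lt_div_iff₀ hqj] at hj2
        linarith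
    rw [hκj j x hx, norm_mul, norm_pow] at hb
    have h1 : ‖q‖ ^ j * ‖κ x‖ ≤ M :=
      (mul_le_mul_of_nonneg_right (pow_le_pow_left₀ hqn.le hρ2.le j) (norm_nonneg _)).trans hb
    calc ‖κ x‖ = (‖q‖ ^ j)⁻¹ * (‖q‖ ^ j * ‖κ x‖) := by field_simp
      _ ≤ ‖x‖ * M := by gcongr
      _ = _ := mul_comm _ _
  -- the entire extension of `κ`
  set K := Function.update κ 0 (limUnder (𝓝[≠] 0) κ) with hK
  have hKd : Differentiable ℂ K := by
    have h1 : DifferentiableOn ℂ K (Metric.ball 0 1) := by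
      refine Complex.differentiableOn_update_limUnder_of_bddAbove
        (Metric.ball_mem_nhds _ one_pos) (hκd.mono fun y hy => hy.2) ⟨M, ?_⟩
      rintro _ ⟨y, ⟨hy1, hy2⟩, rfl⟩
      simp only [Metric.mem_ball, dist_zero_right] at hy1
      exact hsmall y hy2 hy1.le
    intro y
    by_cases hy : y = 0
    · exact hy ▸ h1.differentiableAt (Metric.ball_mem_nhds _ one_pos)
    · refine (hκd.differentiableAt (isOpen_compl_singleton.mem_nhds hy)).congr_of_eventuallyEq ?_
      filter_upwards [isOpen_compl_singleton.mem_nhds hy] with z hz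
      exact Function.update_of_ne hz _ _
  have hKκ : ∀ y, y ≠ 0 → K y = κ y := fun y hy => Function.update_of_ne hy _ _
  have hK0 : K 0 = 0 := by
    have h1 : Tendsto (fun y => K (q * y)) (𝓝[≠] 0) (𝓝 (K 0)) := by
      have : ContinuousAt (fun y => K (q * y)) 0 :=
        (hKd.continuous.comp (continuous_const.mul continuous_id)).continuousAt
      simpa using this.tendsto.mono_left nhdsWithin_le_nhds
    have h2 : Tendsto (fun y => ρ * K y) (𝓝[≠] 0) (𝓝 (ρ * K 0)) :=
      ((hKd.continuous.tendsto 0).const_mul ρ).mono_left nhdsWithin_le_nhds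
    have h3 := tendsto_nhds_unique h1 (h2.congr' (by
      filter_upwards [self_mem_nhdsWithin] with y hy
      rw [hKκ y hy, hKκ _ (mul_ne_zero hq0 hy), hκq y hy]))
    have h4 : (ρ - 1) * K 0 = 0 := by rw [sub_mul, one_mul, ← h3, sub_self]
    exact (mul_eq_zero.1 h4).resolve_left (sub_ne_zero.2 hρne)
  set L := dslope K 0 with hL
  have hLd : Differentiable ℂ L := by
    rw [← differentiableOn_univ] at hKd ⊢
    exact (Complex.differentiableOn_dslope univ_mem).2 hKd
  have hLκ : ∀ y, y ≠ 0 → L y = κ y / y := fun y hy => by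
    rw [hL, dslope_of_ne _ hy, slope_def_field, hK0, hKκ y hy, sub_zero, sub_zero]
  have hLb : Bornology.IsBounded (Set.range L) := by
    obtain ⟨B, hB⟩ := (isCompact_closedBall (0 : ℂ) 1).exists_bound_of_continuousOn
      hLd.continuous.continuousOn
    refine isBounded_iff_forall_norm_le.2 ⟨max B M, ?_⟩
    rintro _ ⟨y, rfl⟩
    rcases le_total ‖y‖ 1 with hy | hy
    · exact (hB y (by simpa using hy)).trans (le_max_left _ _)
    · have hy0 : 0 < ‖y‖ := by linarith
      rw [hLκ y (norm_pos_iff.1 hy0), norm_div]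
      exact ((div_le_iff₀ hy0).2 (hlarge y hy)).trans (le_max_right _ _)
  have hLc := hLd.apply_eq_apply_of_bounded hLb
  have h5 : ρ * L x = q * L x := by
    have h6 : L (q * x) = L x := hLc _ _
    have h7 : q * L (q * x) = ρ * L x := by
      rw [hLκ _ (mul_ne_zero hq0 hx), hLκ x hx, hκq x hx]; field_simp
    rw [← h7, h6]
  have h8 : L x = 0 := by
    have : (ρ - q) * L x = 0 := by rw [sub_mul, h5, sub_self]
    refine (mul_eq_zero.1 this).resolve_left (sub_ne_zero.2 fun h => ?_)
    rw [h] at hρ2; exact lt_irrefl _ hρ2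
  rw [hLκ x hx] at h8
  have h9 : κ x = 0 := (div_eq_zero_iff.1 h8).resolve_right hx
  exact (mul_eq_zero.1 h9).resolve_right (zpow_ne_zero _ hx)

/-- A theta function of degree `N` (a holomorphic function on `ℂ^*` with `f(qx) = c x⁻ᴺ f(x)`)
with `N` zeros `p_i` which are distinct modulo `q^ℤ` vanishes identically, unless
`c ∈ q^ℤ ∏ (-p_i)`. -/
lemma eq_zero_of_theta_zeros {ι : Type*} [Fintype ι] (hq0 : q ≠ 0) (hq : ‖q‖ < 1)
    {f : ℂ → ℂ} {c : ℂ} (hc0 : c ≠ 0) (p : ι → ℂ) (hp0 : ∀ i, p i ≠ 0)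
    (hp : ∀ i j, i ≠ j → ∀ m : ℤ, p i / p j ≠ q ^ m)
    (hc : ∀ m : ℤ, c ≠ (∏ i, -p i) * q ^ m)
    (hf : DifferentiableOn ℂ f {0}ᶜ)
    (hfq : ∀ x, x ≠ 0 → f (q * x) = c * (x ^ Fintype.card ι)⁻¹ * f x)
    (hfp : ∀ i, f (p i) = 0) (x : ℂ) (hx : x ≠ 0) : f x = 0 := by
  classical
  set t : ℂ → ℂ := fun x => ∏ i, qtheta q (x / p i) with ht
  have hθd : ∀ i, ∀ x, x ≠ 0 → DifferentiableAt ℂ (fun x => qtheta q (x / p i)) x :=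
    fun i x hx => DifferentiableAt.comp (g := qtheta q) x
      (differentiableAt_qtheta hq (div_ne_zero hx (hp0 i))) (differentiableAt_id.div_const _)
  have htd : DifferentiableOn ℂ t {0}ᶜ := fun x hx =>
    (DifferentiableAt.fun_finsetProd fun i _ => hθd i x hx).differentiableWithinAt
  have htq : ∀ x, x ≠ 0 → t (q * x) = (∏ i, -p i) * (x ^ Fintype.card ι)⁻¹ * t x := by
    intro x hx
    have : (x ^ Fintype.card ι)⁻¹ = ∏ _i : ι, x⁻¹ := by simp
    simp only [ht]
    rw [this, ← prod_mul_distrib, ← prod_mul_distrib]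
    refine prod_congr rfl fun i _ => ?_
    rw [mul_div_assoc, qtheta_mul_q hq0 hq (div_ne_zero hx (hp0 i)), inv_div]
    ring
  have hfz : ∀ i, ∀ m : ℤ, f (p i * q ^ m) = 0 := by
    intro i m
    induction m with
    | zero => simpa using hfp i
    | succ j ih =>
      rw [zpow_add_one₀ hq0, ← mul_assoc, mul_comm _ q,
        hfq _ (mul_ne_zero (hp0 i) (zpow_ne_zero _ hq0)), ih, mul_zero]
    | pred j ih =>
      have hne : p i * q ^ (-(j : ℤ) - 1) ≠ 0 := mul_ne_zero (hp0 i) (zpow_ne_zero _ hq0)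
      have h := hfq _ hne
      rw [mul_left_comm, ← zpow_one_add₀ hq0, add_sub_cancel, ih] at h
      exact (mul_eq_zero.1 h.symm).resolve_left
        (mul_ne_zero hc0 (inv_ne_zero (pow_ne_zero _ hne)))
  have hts : ∀ y ∈ ({0}ᶜ : Set ℂ), t y = 0 → f y = 0 ∧ deriv t y ≠ 0 := by
    intro y hy hty
    have hy0 : y ≠ 0 := hy
    obtain ⟨i, -, hi⟩ := prod_eq_zero_iff.1 hty
    obtain ⟨m, hm⟩ : ∃ m : ℤ, y / p i = q ^ m := by
      by_contra hcon
      push Not at hcon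
      exact qtheta_ne_zero hq (div_ne_zero hy0 (hp0 i)) hcon hi
    have hyp : y = p i * q ^ m := by rw [← hm, mul_div_cancel₀ _ (hp0 i)]
    refine ⟨hyp ▸ hfz i m, ?_⟩
    have h1 : HasDerivAt (fun x => qtheta q (x / p i)) (deriv (qtheta q) (y / p i) * (1 / p i)) y :=
      HasDerivAt.comp (h₂ := qtheta q) y
        (differentiableAt_qtheta hq (div_ne_zero hy0 (hp0 i))).hasDerivAt
        ((hasDerivAt_id y).div_const _)
    have h2 : DifferentiableAt ℂ (fun x => ∏ j ∈ univ.erase i, qtheta q (x / p j)) y :=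
      DifferentiableAt.fun_finsetProd fun j _ => hθd j y hy0
    have h3 : t = fun x => qtheta q (x / p i) * ∏ j ∈ univ.erase i, qtheta q (x / p j) := by
      funext x
      exact (mul_prod_erase univ (fun j => qtheta q (x / p j)) (mem_univ i)).symm
    have h4 := h1.fun_mul h2.hasDerivAt
    rw [← h3] at h4
    rw [h4.deriv, hi, zero_mul, add_zero]
    refine mul_ne_zero (mul_ne_zero ?_ (one_div_ne_zero (hp0 i))) (prod_ne_zero_iff.2 ?_)
    · rw [hm]; exact deriv_qtheta_ne_zero hq0 hq m
    · intro j hj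
      refine qtheta_ne_zero hq (div_ne_zero hy0 (hp0 j)) fun m' hm' => ?_
      refine hp i j (ne_of_mem_erase hj).symm (m' - m) ?_
      rw [zpow_sub₀ hq0, ← hm, ← hm']
      have := hp0 i
      have := hp0 j
      field_simp
  obtain ⟨g, hgd, hg⟩ := exists_holomorphic_quotient isOpen_compl_singleton hf htd hts
  have hP0 : ∏ i, -p i ≠ 0 := prod_ne_zero_iff.2 fun i _ => neg_ne_zero.2 (hp0 i)
  have hgq : ∀ y, y ≠ 0 → g (q * y) = c / (∏ i, -p i) * g y := by
    -- clear where `t y ≠ 0`, and the zeros of `t` are isolated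
    intro y hy
    have hne : ∀ᶠ z in 𝓝[≠] y, t z ≠ 0 := by
      have hyd := htd.differentiableAt (isOpen_compl_singleton.mem_nhds hy)
      by_cases h0 : t y = 0
      · exact hyd.hasDerivAt.eventually_ne (hts y hy h0).2
      · exact (hyd.continuousAt.eventually_ne h0).filter_mono nhdsWithin_le_nhds
    have hcont : ∀ z, z ≠ 0 → ContinuousAt g z := fun z hz =>
      (hgd.differentiableAt (isOpen_compl_singleton.mem_nhds hz)).continuousAt
    have h1 : Tendsto (fun z => g (q * z)) (𝓝[≠] y) (𝓝 (g (q * y))) :=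
      (ContinuousAt.comp (f := fun z => q * z) (hcont _ (mul_ne_zero hq0 hy))
        (by fun_prop)).tendsto.mono_left nhdsWithin_le_nhds
    have h2 : Tendsto (fun z => c / (∏ i, -p i) * g z) (𝓝[≠] y) (𝓝 (c / (∏ i, -p i) * g y)) :=
      ((hcont y hy).tendsto.const_mul _).mono_left nhdsWithin_le_nhds
    refine tendsto_nhds_unique h1 (h2.congr' ?_)
    filter_upwards [hne, (isOpen_compl_singleton.mem_nhds hy : {0}ᶜ ∈ 𝓝 y) |>
      mem_nhdsWithin_of_mem_nhds] with z hz hz0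
    have hz0' : z ≠ 0 := hz0
    have h3 := hfq z hz0
    rw [hg _ (mul_ne_zero hq0 hz0' : q * z ∈ ({0}ᶜ : Set ℂ)), hg z hz0, htq z hz0] at h3
    have hzN : z ^ Fintype.card ι ≠ 0 := pow_ne_zero _ hz0'
    field_simp at h3 ⊢
    linear_combination -h3
  have := eq_zero_of_multiplier hq0 hq (div_ne_zero hc0 hP0) (fun m hm => hc m (by
    rw [← hm, mul_div_cancel₀ _ hP0])) hgd hgq x hx
  rw [hg x hx, this, mul_zero]

end Rigidity

/-! ### The theta analogue of the Vandermonde product -/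

section ThetaProduct

variable {q : ℂ} {N : ℕ}

/-- The theta analogue `∏_{i<j} z_j θ(z_i/z_j)` of the Vandermonde product. -/
noncomputable def bigTheta (q : ℂ) (z : Fin N → ℂ) : ℂ :=
  ∏ i, ∏ j ∈ Ioi i, z j * qtheta q (z i / z j)

/-- The coordinates of `z` are nonzero and pairwise distinct modulo `q^ℤ`. -/
def QDistinct (q : ℂ) (z : Fin N → ℂ) : Prop :=
  (∀ i, z i ≠ 0) ∧ ∀ i j, i ≠ j → ∀ m : ℤ, z i / z j ≠ q ^ m

lemma bigTheta_ne_zero (hq : ‖q‖ < 1) {z : Fin N → ℂ} (hz : QDistinct q z) :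
    bigTheta q z ≠ 0 :=
  prod_ne_zero_iff.2 fun i _ => prod_ne_zero_iff.2 fun j hj =>
    mul_ne_zero (hz.1 j) (qtheta_ne_zero hq (div_ne_zero (hz.1 i) (hz.1 j))
      (hz.2 i j (mem_Ioi.1 hj).ne))

lemma bigTheta_eq_zero (hq0 : q ≠ 0) (hq : ‖q‖ < 1) {z : Fin N → ℂ} (hz : ∀ i, z i ≠ 0)
    {i j : Fin N} (hij : i ≠ j) (h : z i = z j) : bigTheta q z = 0 := by
  wlog hlt : i < j generalizing i j
  · exact this hij.symm h.symm (lt_of_le_of_ne (not_lt.1 hlt) hij.symm)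
  refine prod_eq_zero (mem_univ i) (prod_eq_zero (mem_Ioi.2 hlt) ?_)
  have := qtheta_zpow hq0 hq 0
  rw [zpow_zero] at this
  rw [h, div_self (hz j), this, mul_zero]

lemma differentiableAt_bigTheta (hq : ‖q‖ < 1) {z : ℂ → Fin N → ℂ} {s : ℂ}
    (hd : ∀ i, DifferentiableAt ℂ (fun t => z t i) s) (hz : ∀ i, z s i ≠ 0) :
    DifferentiableAt ℂ (fun t => bigTheta q (z t)) s := by
  refine DifferentiableAt.fun_finsetProd fun i _ => DifferentiableAt.fun_finsetProd fun j _ => ?_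
  exact (hd j).mul (DifferentiableAt.comp (g := qtheta q) s
    (differentiableAt_qtheta hq (div_ne_zero (hz i) (hz j))) ((hd i).div (hd j) (hz j)))

lemma bigTheta_update (hq0 : q ≠ 0) (hq : ‖q‖ < 1) {z : Fin N → ℂ} (hz : ∀ i, z i ≠ 0)
    (i : Fin N) :
    bigTheta q (Function.update z i (q * z i)) = -(∏ j, -(z j / z i)) * bigTheta q z := by
  have hfac : ∀ k, ∀ l ∈ Ioi k,
      Function.update z i (q * z i) l *
        qtheta q (Function.update z i (q * z i) k / Function.update z i (q * z i) l) =
      ((if k = i then -(z l / z i) else 1) * (if l = i then -(z k / z i) else 1)) *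
        (z l * qtheta q (z k / z l)) := by
    intro k l hl
    have hkl : k ≠ l := (mem_Ioi.1 hl).ne
    have hi := hz i
    have hk := hz k
    have hl := hz l
    by_cases h1 : k = i
    · subst h1
      rw [Function.update_self, Function.update_of_ne hkl.symm, if_pos rfl, if_neg hkl.symm,
        mul_div_assoc, qtheta_mul_q hq0 hq (div_ne_zero hk hl)]
      field_simp
    · by_cases h2 : l = i
      · subst h2
        rw [Function.update_self, Function.update_of_ne hkl, if_pos rfl, if_neg hkl,
          mul_comm q, ← div_div, qtheta_div_q hq0 hq (div_ne_zero hk hl)]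
        field_simp
      · rw [Function.update_of_ne h1, Function.update_of_ne h2, if_neg h1, if_neg h2]
        ring
  unfold bigTheta
  rw [prod_congr rfl fun k _ => prod_congr rfl (hfac k)]
  simp only [prod_mul_distrib]
  congr 1
  have h1 : ∏ k : Fin N, ∏ l ∈ Ioi k, (if k = i then -(z l / z i) else 1) =
      ∏ l ∈ Ioi i, -(z l / z i) := by
    rw [prod_eq_single i]
    · simp
    · intro k _ hk; simp [hk]
    · simp
  have h2 : ∏ k : Fin N, ∏ l ∈ Ioi k, (if l = i then -(z k / z i) else 1) =
      ∏ k ∈ Iio i, -(z k / z i) := by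
    simp only [prod_ite_eq', mem_Ioi]
    rw [← prod_filter]
    refine prod_congr ?_ fun _ _ => rfl
    ext; simp
  rw [h1, h2, ← mul_prod_erase univ _ (mem_univ i), div_self (hz i), neg_mul, neg_neg, one_mul,
    ← prod_union]
  · refine prod_congr ?_ fun _ _ => rfl
    ext k
    simp only [mem_union, mem_Ioi, mem_Iio, mem_erase, mem_univ, and_true]
    exact ⟨fun h => h.elim (fun h => h.ne') (fun h => h.ne), fun h => (lt_or_gt_of_ne h).symm⟩
  · exact disjoint_left.2 fun k hk hk' => lt_asymm (mem_Ioi.1 hk) (mem_Iio.1 hk')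

/-- A property of integer vectors which is invariant under adding unit vectors, in both
directions, and holds at `0` holds everywhere. -/
lemma int_vector_induction {P : (Fin N → ℤ) → Prop} (h0 : P 0)
    (hs : ∀ ν i, P (ν + Pi.single i 1) ↔ P ν) (ν : Fin N → ℤ) : P ν := by
  have hm : ∀ (m : ℤ) ν i, P (ν + Pi.single i m) ↔ P ν := by
    intro m ν i
    induction m with
    | zero => simp
    | succ j ih => rw [Pi.single_add, ← add_assoc, hs, ih]
    | pred j ih => rw [← hs (ν + _), add_assoc, ← Pi.single_add, sub_add_cancel, ih]
  have : ∀ s : Finset (Fin N), P (∑ i ∈ s, Pi.single i (ν i)) := by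
    intro s
    induction s using Finset.induction_on with
    | empty => simpa using h0
    | insert i s hi ih => rw [sum_insert hi, add_comm, hm]; exact ih
  simpa [Finset.univ_sum_single] using this univ

/-- The integer `m (m - 1) / 2`. -/
def tri (m : ℤ) : ℤ := m * (m - 1) / 2

lemma tri_zero : tri 0 = 0 := rfl

lemma tri_succ (m : ℤ) : tri (m + 1) = tri m + m := by
  unfold tri
  rw [show (m + 1) * (m + 1 - 1) = m * (m - 1) + m * 2 by ring,
    Int.add_mul_ediv_right _ _ two_ne_zero]

/-- Quasi-periodicity of `bigTheta` under arbitrary `q`-shifts. -/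
lemma bigTheta_shift (hq0 : q ≠ 0) (hq : ‖q‖ < 1) {x : Fin N → ℂ} (hx : ∀ i, x i ≠ 0)
    (ν : Fin N → ℤ) :
    bigTheta q (fun i => x i * q ^ ν i) * ∏ i, (q ^ (N * tri (ν i)) * x i ^ (N * ν i)) =
      bigTheta q x * ((-∏ i, -x i) ^ (∑ i, ν i) * q ^ tri (∑ i, ν i)) := by
  refine int_vector_induction (P := fun ν : Fin N → ℤ =>
    bigTheta q (fun i => x i * q ^ ν i) * ∏ i, (q ^ (N * tri (ν i)) * x i ^ (N * ν i)) =
      bigTheta q x * ((-∏ i, -x i) ^ (∑ i, ν i) * q ^ tri (∑ i, ν i))) (by simp [tri_zero])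
    (fun ν i => ?_) ν
  set z : Fin N → ℂ := fun i => x i * q ^ ν i with hz
  have hz0 : ∀ i, z i ≠ 0 := fun i => mul_ne_zero (hx i) (zpow_ne_zero _ hq0)
  have hP0 : -∏ i, -x i ≠ 0 :=
    neg_ne_zero.2 (prod_ne_zero_iff.2 fun i _ => neg_ne_zero.2 (hx i))
  have h1 : (fun j => x j * q ^ (ν + Pi.single i (1 : ℤ) : Fin N → ℤ) j) = Function.update z i (q * z i) := by
    funext j
    by_cases hj : j = i
    · subst hj
      rw [Function.update_self, Pi.add_apply, Pi.single_eq_same, zpow_add_one₀ hq0, hz]; ring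
    · rw [Function.update_of_ne hj, Pi.add_apply, Pi.single_eq_of_ne hj, add_zero]
  have h2 : ∏ j, (q ^ (N * tri ((ν + Pi.single i (1 : ℤ) : Fin N → ℤ) j)) * x j ^ (N * (ν + Pi.single i (1 : ℤ) : Fin N → ℤ) j)) =
      z i ^ N * ∏ j, (q ^ (N * tri (ν j)) * x j ^ (N * ν j)) := by
    rw [← mul_prod_erase univ _ (mem_univ i), ← mul_prod_erase univ
      (fun j => q ^ (N * tri (ν j)) * x j ^ (N * ν j)) (mem_univ i), ← mul_assoc]
    congr 1
    · have e : (q ^ ν i) ^ N = q ^ ((N : ℤ) * ν i) := by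
        rw [← zpow_natCast, ← zpow_mul, mul_comm]
      rw [Pi.add_apply, Pi.single_eq_same, tri_succ, mul_add, mul_add, zpow_add₀ hq0,
        zpow_add₀ (hx i), mul_one, zpow_natCast, hz, mul_pow, e]
      ring
    · refine prod_congr rfl fun j hj => ?_
      rw [Pi.add_apply, Pi.single_eq_of_ne (ne_of_mem_erase hj), add_zero]
  have h3 : ∑ j, (ν + Pi.single i (1 : ℤ) : Fin N → ℤ) j = ∑ j, ν j + 1 := by
    simp [sum_add_distrib]
  have h4 : (∏ j, -(z j / z i)) * z i ^ N = (∏ j, -x j) * q ^ (∑ j, ν j) := by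
    have e1 : z i ^ N = ∏ _j : Fin N, z i := by simp
    have e2 : q ^ (∑ j, ν j) = ∏ j, q ^ ν j := by
      generalize (univ : Finset (Fin N)) = s
      induction s using Finset.induction_on with
      | empty => simp
      | insert a s ha ih => rw [sum_insert ha, prod_insert ha, zpow_add₀ hq0, ih]
    rw [e1, e2, ← prod_mul_distrib, ← prod_mul_distrib]
    refine prod_congr rfl fun j _ => ?_
    rw [neg_mul, div_mul_cancel₀ _ (hz0 i), hz]; ring
  have hc : -((∏ j, -x j) * q ^ (∑ j, ν j)) ≠ 0 := by
    rw [← neg_mul]; exact mul_ne_zero hP0 (zpow_ne_zero _ hq0)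
  rw [h1, h2, h3, bigTheta_update hq0 hq hz0, tri_succ, zpow_add₀ hq0, zpow_add_one₀ hP0]
  generalize (∏ i, (q ^ (N * tri (ν i)) * x i ^ (N * ν i))) = E
  rw [show ∀ T : ℂ, -(∏ j, -(z j / z i)) * T * (z i ^ N * E) =
      -((∏ j, -(z j / z i)) * z i ^ N) * (T * E) from fun T => by ring, h4,
    show ∀ T A B C : ℂ, T * (A * (-∏ j, -x j) * (B * C)) =
      -((∏ j, -x j) * C) * (T * (A * B)) from fun T A B C => by ring]
  exact mul_right_inj' hc

end ThetaProduct

/-! ### Rigidity of determinants of theta functions -/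

section DetRigidity

variable {q w : ℂ} {N : ℕ} {f : Fin N → ℂ → ℂ}

/-- The determinant `det (f_k(x_i))`. -/
noncomputable def ptDet (f : Fin N → ℂ → ℂ) (x : Fin N → ℂ) : ℂ :=
  (Matrix.of fun i k => f k (x i)).det

/-- The reference function `∏_{i<j} x_j θ(x_i/x_j) · θ(w ∏ (-x_i))`, which has the same
quasi-periodicity as `ptDet f` in each variable. -/
noncomputable def refTheta (q w : ℂ) (x : Fin N → ℂ) : ℂ :=
  bigTheta q x * qtheta q (w * ∏ i, -x i)

/-- `x` has nonzero coordinates and is not a zero of `refTheta q w`. -/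
def Admissible (q w : ℂ) (x : Fin N → ℂ) : Prop :=
  QDistinct q x ∧ ∀ m : ℤ, w * ∏ i, -x i ≠ q ^ m

lemma prod_neg_ne_zero {x : Fin N → ℂ} (hx : ∀ i, x i ≠ 0) : ∏ i, -x i ≠ 0 :=
  prod_ne_zero_iff.2 fun i _ => neg_ne_zero.2 (hx i)

lemma Admissible.refTheta_ne_zero (hq : ‖q‖ < 1) (hw : w ≠ 0) {x : Fin N → ℂ}
    (hx : Admissible q w x) : refTheta q w x ≠ 0 :=
  mul_ne_zero (bigTheta_ne_zero hq hx.1)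
    (qtheta_ne_zero hq (mul_ne_zero hw (prod_neg_ne_zero hx.1.1)) hx.2)

lemma update_ne_zero {x : Fin N → ℂ} (hx : ∀ i, x i ≠ 0) (i : Fin N) {s : ℂ} (hs : s ≠ 0)
    (j : Fin N) : Function.update x i s j ≠ 0 := by
  by_cases h : j = i
  · subst h; simpa using hs
  · simpa [h] using hx j

lemma differentiableAt_update_apply (x : Fin N → ℂ) (i j : Fin N) (s : ℂ) :
    DifferentiableAt ℂ (fun t => Function.update x i t j) s := by
  by_cases h : j = i
  · subst h; simp
  · simp [h]

lemma ptDet_update (f : Fin N → ℂ → ℂ) (x : Fin N → ℂ) (i : Fin N) (s : ℂ) :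
    ptDet f (Function.update x i s) =
      ((Matrix.of fun i k => f k (x i)).updateRow i fun k => f k s).det := by
  unfold ptDet
  congr 1
  ext j k
  by_cases h : j = i
  · subst h; simp
  · simp [h]

/-- One coordinate can be moved: the ratio `ptDet f / refTheta q w` does not change. This is
`eq_zero_of_theta_zeros` in the variable `x_i`, the zeros being the coordinates of the new
point. -/
lemma ptDet_update_mul (hq0 : q ≠ 0) (hq : ‖q‖ < 1) (hw : w ≠ 0)
    (hf : ∀ k, DifferentiableOn ℂ (f k) {0}ᶜ)
    (hfq : ∀ k x, x ≠ 0 → f k (q * x) = w⁻¹ * (x ^ N)⁻¹ * f k x)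
    {x : Fin N → ℂ} (hx : ∀ i, x i ≠ 0) (i : Fin N) {t : ℂ}
    (hy : Admissible q w (Function.update x i t)) :
    ptDet f x * refTheta q w (Function.update x i t) =
      ptDet f (Function.update x i t) * refTheta q w x := by
  set y := Function.update x i t with hydef
  set F : ℂ → ℂ := fun s => ptDet f (Function.update x i s) * refTheta q w y -
    ptDet f y * refTheta q w (Function.update x i s) with hF
  suffices h : F (x i) = 0 by
    simp only [hF, Function.update_eq_self] at h
    exact sub_eq_zero.1 h
  refine eq_zero_of_theta_zeros hq0 hq (inv_ne_zero hw) y hy.1.1 hy.1.2 ?_ ?_ ?_ ?_ (x i) (hx i)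
  · intro m hm
    refine hy.2 (-m) ?_
    have hP := prod_neg_ne_zero hy.1.1
    rw [zpow_neg]
    refine eq_inv_of_mul_eq_one_left ?_
    rw [mul_assoc, ← hm, mul_inv_cancel₀ hw]
  · intro s hs
    have hs0 : s ≠ 0 := hs
    refine DifferentiableAt.differentiableWithinAt ?_
    have hD : DifferentiableAt ℂ (fun s => ptDet f (Function.update x i s)) s := by
      simp only [ptDet, Matrix.det_apply']
      refine DifferentiableAt.fun_sum fun σ _ => (differentiableAt_const _).mul ?_
      refine DifferentiableAt.fun_finsetProd fun k _ => ?_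
      exact DifferentiableAt.comp (g := f k) s ((hf k).differentiableAt
        (isOpen_compl_singleton.mem_nhds (update_ne_zero hx i hs0 _)))
        (differentiableAt_update_apply x i _ s)
    have hR : DifferentiableAt ℂ (fun s => refTheta q w (Function.update x i s)) s := by
      refine (differentiableAt_bigTheta hq (fun j => differentiableAt_update_apply x i j s)
        (update_ne_zero hx i hs0)).mul ?_
      refine DifferentiableAt.comp (g := qtheta q) s (differentiableAt_qtheta hq
        (mul_ne_zero hw (prod_neg_ne_zero (update_ne_zero hx i hs0)))) ?_
      exact (differentiableAt_const _).mul (DifferentiableAt.fun_finsetProd fun j _ =>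
        (differentiableAt_update_apply x i j s).neg)
    exact (hD.mul_const _).sub (hR.const_mul _)
  · intro s hs
    have hD : ptDet f (Function.update x i (q * s)) =
        w⁻¹ * (s ^ N)⁻¹ * ptDet f (Function.update x i s) := by
      rw [ptDet_update, ptDet_update, ← Matrix.det_updateRow_smul]
      congr 2
      funext k
      simp [hfq k s hs]
    have hR : refTheta q w (Function.update x i (q * s)) =
        w⁻¹ * (s ^ N)⁻¹ * refTheta q w (Function.update x i s) := by
      set z := Function.update x i s with hz
      have hz0 : ∀ j, z j ≠ 0 := update_ne_zero hx i hs
      have hzi : z i = s := by simp [hz]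
      have h1 : Function.update x i (q * s) = Function.update z i (q * z i) := by
        rw [hzi, hz, Function.update_idem]
      have h2 : w * ∏ j, -(Function.update z i (q * z i) j) = q * (w * ∏ j, -z j) := by
        rw [← mul_prod_erase univ _ (mem_univ i), ← mul_prod_erase univ (fun j => -z j)
          (mem_univ i), Function.update_self, prod_congr rfl fun j hj => by
            rw [Function.update_of_ne (ne_of_mem_erase hj)]]
        ring
      have hP := prod_neg_ne_zero hz0
      have h3 : ∏ j, -(z j / z i) = (∏ j, -z j) * (s ^ N)⁻¹ := by
        have : (s ^ N)⁻¹ = ∏ _j : Fin N, s⁻¹ := by simp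
        rw [this, ← prod_mul_distrib]
        refine prod_congr rfl fun j _ => ?_
        rw [hzi]; ring
      rw [h1, refTheta, refTheta, h2, bigTheta_update hq0 hq hz0, h3,
        qtheta_mul_q hq0 hq (mul_ne_zero hw hP)]
      field_simp
    simp only [hF, hD, hR, Fintype.card_fin]
    ring
  · intro j
    by_cases hj : j = i
    · have : y j = t := by rw [hj, hydef, Function.update_self]
      simp only [hF, this]
      rw [← hydef, sub_self]
    · have hyj : y j = x j := by rw [hydef, Function.update_of_ne hj]
      simp only [hF, hyj]
      have hD : ptDet f (Function.update x i (x j)) = 0 := by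
        refine Matrix.det_zero_of_row_eq hj ?_
        funext k
        simp [hj]
      have hR : refTheta q w (Function.update x i (x j)) = 0 := by
        rw [refTheta, bigTheta_eq_zero hq0 hq (update_ne_zero hx i (hx j)) hj (by simp [hj]),
          zero_mul]
      rw [hD, hR]; ring

/-- Only countably many values of a coordinate are not admissible. -/
lemma countable_not_admissible (hw : w ≠ 0) {x : Fin N → ℂ}
    (hx : QDistinct q x) (i : Fin N) :
    {t : ℂ | ¬ Admissible q w (Function.update x i t)}.Countable := by
  have hsub : {t : ℂ | ¬ Admissible q w (Function.update x i t)} ⊆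
      {0} ∪ (⋃ (j : Fin N) (m : ℤ), {x j * q ^ m}) ∪ (⋃ (j : Fin N) (m : ℤ), {x j / q ^ m}) ∪
        ⋃ m : ℤ, {-(q ^ m / (w * ∏ j ∈ univ.erase i, -x j))} := by
    intro t ht
    by_contra hcon
    simp only [Set.mem_union, Set.mem_singleton_iff, Set.mem_iUnion, not_or, not_exists] at hcon
    obtain ⟨⟨⟨ht0, h1⟩, h2⟩, h3⟩ := hcon
    refine ht ⟨⟨update_ne_zero hx.1 i ht0, fun j k hjk m hm => ?_⟩, fun m hm => ?_⟩
    · by_cases hj : j = i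
      · subst hj
        rw [Function.update_self, Function.update_of_ne hjk.symm, div_eq_iff (hx.1 k)] at hm
        exact h1 k m (by rw [hm, mul_comm])
      · by_cases hk : k = i
        · subst hk
          rw [Function.update_self, Function.update_of_ne hj] at hm
          refine h2 j m ?_
          rw [← hm]
          have := hx.1 j
          field_simp
        · rw [Function.update_of_ne hj, Function.update_of_ne hk] at hm
          exact hx.2 j k hjk m hm
    · rw [← mul_prod_erase univ _ (mem_univ i), Function.update_self,
        prod_congr rfl fun j hj => by rw [Function.update_of_ne (ne_of_mem_erase hj)]] at hm
      have hP : ∏ j ∈ univ.erase i, -x j ≠ 0 :=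
        prod_ne_zero_iff.2 fun j _ => neg_ne_zero.2 (hx.1 j)
      refine h3 m ?_
      rw [← hm]
      field_simp
  refine Set.Countable.mono hsub ?_
  refine (((Set.countable_singleton _).union ?_).union ?_).union ?_
  · exact Set.countable_iUnion fun j => Set.countable_iUnion fun m => Set.countable_singleton _
  · exact Set.countable_iUnion fun j => Set.countable_iUnion fun m => Set.countable_singleton _
  · exact Set.countable_iUnion fun m => Set.countable_singleton _

/-- The ratio `ptDet f / refTheta q w` is the same at any two admissible points: replace the
coordinates one at a time, in both points, by a common generic value. -/
lemma ptDet_mul_refTheta (hq0 : q ≠ 0) (hq : ‖q‖ < 1) (hw : w ≠ 0)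
    (hf : ∀ k, DifferentiableOn ℂ (f k) {0}ᶜ)
    (hfq : ∀ k x, x ≠ 0 → f k (q * x) = w⁻¹ * (x ^ N)⁻¹ * f k x)
    {x y : Fin N → ℂ} (hx : Admissible q w x) (hy : Admissible q w y) :
    ptDet f x * refTheta q w y = ptDet f y * refTheta q w x := by
  suffices h : ∀ s : Finset (Fin N), ∀ x y : Fin N → ℂ, Admissible q w x → Admissible q w y →
      (∀ i, i ∉ s → x i = y i) → ptDet f x / refTheta q w x = ptDet f y / refTheta q w y by
    have := h univ x y hx hy (by simp)
    rwa [div_eq_div_iff (hx.refTheta_ne_zero hq hw) (hy.refTheta_ne_zero hq hw)] at this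
  intro s
  induction s using Finset.induction_on with
  | empty => intro x y _ _ h; rw [funext fun i => h i (by simp)]
  | insert i s hi ih =>
    intro x y hx hy h
    obtain ⟨t, ht⟩ := (((countable_not_admissible hw hx.1 i).union
      (countable_not_admissible hw hy.1 i)).dense_compl ℂ).nonempty
    simp only [Set.mem_compl_iff, Set.mem_union, Set.mem_ofPred_eq, not_or, not_not] at ht
    obtain ⟨hxt, hyt⟩ := ht
    have e1 := ptDet_update_mul hq0 hq hw hf hfq hx.1.1 i hxt
    have e2 := ptDet_update_mul hq0 hq hw hf hfq hy.1.1 i hyt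
    rw [← div_eq_div_iff (hx.refTheta_ne_zero hq hw) (hxt.refTheta_ne_zero hq hw)] at e1
    rw [← div_eq_div_iff (hy.refTheta_ne_zero hq hw) (hyt.refTheta_ne_zero hq hw)] at e2
    rw [e1, e2]
    refine ih _ _ hxt hyt fun j hj => ?_
    by_cases hji : j = i
    · subst hji; simp
    · rw [Function.update_of_ne hji, Function.update_of_ne hji]
      exact h j (by simp [hji, hj])

/-- If `x_1⋯x_N = y_1⋯y_N` the last theta factor of the reference function drops out. -/
lemma ptDet_mul_bigTheta (hq0 : q ≠ 0) (hq : ‖q‖ < 1) (hw : w ≠ 0)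
    (hf : ∀ k, DifferentiableOn ℂ (f k) {0}ᶜ)
    (hfq : ∀ k x, x ≠ 0 → f k (q * x) = w⁻¹ * (x ^ N)⁻¹ * f k x)
    {x y : Fin N → ℂ} (hx : Admissible q w x) (hy : Admissible q w y)
    (hxy : ∏ i, x i = ∏ i, y i) :
    ptDet f x * bigTheta q y = ptDet f y * bigTheta q x := by
  have h := ptDet_mul_refTheta hq0 hq hw hf hfq hx hy
  have hne := qtheta_ne_zero hq (mul_ne_zero hw (prod_neg_ne_zero hx.1.1)) hx.2
  have hP : ∏ i, -y i = ∏ i, -x i := by rw [prod_neg, prod_neg, hxy]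
  rw [refTheta, refTheta, hP, ← mul_assoc, ← mul_assoc] at h
  exact mul_right_cancel₀ hne h

end DetRigidity

/-! ### The one-dimensional lattice sums -/

section OneDimensional

variable {q w : ℂ} {N : ℕ} {a b : Fin N → ℂ}

/-- The weight `∏_j (q a_j⁻¹ z)_∞ (q b_j⁻¹ z⁻¹)_∞`. -/
noncomputable def weight (q : ℂ) (a b : Fin N → ℂ) (z : ℂ) : ℂ :=
  ∏ j, qp q (q * (a j)⁻¹ * z) * qp q (q * (b j)⁻¹ * z⁻¹)

/-- The contribution of the lattice point `z = x qᵐ` to the one-dimensional sum: the weight times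
`zᵏ`, multiplied by the Gaussian factor coming from the quasi-periodicity of `bigTheta`. -/
noncomputable def latTerm (q : ℂ) (a b : Fin N → ℂ) (k : ℕ) (x : ℂ) (m : ℤ) : ℂ :=
  q ^ (N * tri m) * x ^ (N * m) * (weight q a b (x * q ^ m) * (x * q ^ m) ^ k)

/-- The theta function `∑_m wᵐ latTerm(x, m)` of degree `N` in `x`. -/
noncomputable def latSum (q : ℂ) (a b : Fin N → ℂ) (w : ℂ) (k : ℕ) (x : ℂ) : ℂ :=
  ∑' m : ℤ, w ^ m * latTerm q a b k x m

lemma latSum_mul_q (hq0 : q ≠ 0) (hw : w ≠ 0) (k : ℕ) {x : ℂ} (hx : x ≠ 0) :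
    latSum q a b w k (q * x) = w⁻¹ * (x ^ N)⁻¹ * latSum q a b w k x := by
  unfold latSum
  rw [← tsum_mul_left, ← (Equiv.addRight (1 : ℤ)).tsum_eq
    (fun m : ℤ => w⁻¹ * (x ^ N)⁻¹ * (w ^ m * latTerm q a b k x m))]
  refine tsum_congr fun m => ?_
  have h1 : q * x * q ^ m = x * q ^ (m + 1) := by rw [zpow_add_one₀ hq0]; ring
  rw [Equiv.coe_addRight, latTerm, latTerm, h1, tri_succ, zpow_add_one₀ hw, mul_zpow, mul_add,
    mul_add, zpow_add₀ hq0, zpow_add₀ hx, mul_one, zpow_natCast]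
  field_simp
  rw [zpow_add₀ hq0]
  ring

/-- The growth of `(q b⁻¹ x⁻¹ q⁻ᵐ)_∞` as `m → ∞`. -/
lemma qp_shift_pos (hq0 : q ≠ 0) (hq : ‖q‖ < 1) {b x : ℂ} (hb : b ≠ 0) (hx : x ≠ 0) (m : ℕ) :
    q ^ tri m * x ^ (m : ℤ) * qp q (q * b⁻¹ * (x * q ^ (m : ℤ))⁻¹) =
      (-b⁻¹) ^ m * (∏ i ∈ range m, (1 - q ^ i * (b * x))) * qp q (q * b⁻¹ * x⁻¹) := by
  induction m with
  | zero => simp [tri_zero]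
  | succ m ih =>
    have hqm : q ^ (m : ℤ) ≠ 0 := zpow_ne_zero _ hq0
    have h1 : q * b⁻¹ * (x * q ^ ((m : ℤ) + 1))⁻¹ = b⁻¹ * (x * q ^ (m : ℤ))⁻¹ := by
      rw [zpow_add_one₀ hq0]; field_simp
    have h2 : q * (b⁻¹ * (x * q ^ (m : ℤ))⁻¹) = q * b⁻¹ * (x * q ^ (m : ℤ))⁻¹ := by ring
    have h3 : q ^ (m : ℤ) * x * (1 - b⁻¹ * (x * q ^ (m : ℤ))⁻¹) =
        -b⁻¹ * (1 - q ^ m * (b * x)) := by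
      rw [zpow_natCast] at hqm ⊢
      field_simp
      ring
    rw [Nat.cast_succ, h1, qp_step hq, h2, tri_succ, zpow_add₀ hq0, zpow_add_one₀ hx, pow_succ,
      prod_range_succ]
    linear_combination (q ^ (m : ℤ) * x * (1 - b⁻¹ * (x * q ^ (m : ℤ))⁻¹)) * ih +
      ((-b⁻¹) ^ m * (∏ i ∈ range m, (1 - q ^ i * (b * x))) * qp q (q * b⁻¹ * x⁻¹)) * h3

/-- The growth of `(q a⁻¹ x q⁻ᵐ)_∞` as `m → ∞`. -/
lemma qp_shift_neg (hq0 : q ≠ 0) (hq : ‖q‖ < 1) {a x : ℂ} (ha : a ≠ 0) (hx : x ≠ 0) (m : ℕ) :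
    q ^ tri (-m) * x ^ (-m : ℤ) * qp q (q * a⁻¹ * (x * q ^ (-m : ℤ))) =
      (-(q * a⁻¹)) ^ m * (∏ i ∈ range m, (1 - q ^ i * (a * x⁻¹))) * qp q (q * a⁻¹ * x) := by
  induction m with
  | zero => simp [tri_zero]
  | succ m ih =>
    have hqm : q ^ m ≠ 0 := pow_ne_zero _ hq0
    have h0 : tri (-(m : ℤ) - 1) = tri (-m) + (m + 1) := by
      have := tri_succ (-(m : ℤ) - 1)
      rw [sub_add_cancel] at this
      rw [this]; ring
    have h1 : q * a⁻¹ * (x * q ^ (-(m : ℤ) - 1)) = a⁻¹ * (x * q ^ (-m : ℤ)) := by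
      rw [zpow_sub_one₀ hq0]; field_simp
    have h2 : q * (a⁻¹ * (x * q ^ (-m : ℤ))) = q * a⁻¹ * (x * q ^ (-m : ℤ)) := by ring
    have h3 : q ^ ((m : ℤ) + 1) * x⁻¹ * (1 - a⁻¹ * (x * q ^ (-m : ℤ))) =
        -(q * a⁻¹) * (1 - q ^ m * (a * x⁻¹)) := by
      rw [zpow_neg, zpow_add_one₀ hq0, zpow_natCast]
      field_simp
      ring
    rw [Nat.cast_succ, neg_add, ← sub_eq_add_neg, h1, qp_step hq, h2, h0, zpow_add₀ hq0,
      zpow_sub_one₀ hx, pow_succ, prod_range_succ]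
    linear_combination (q ^ ((m : ℤ) + 1) * x⁻¹ * (1 - a⁻¹ * (x * q ^ (-m : ℤ)))) * ih +
      ((-(q * a⁻¹)) ^ m * (∏ i ∈ range m, (1 - q ^ i * (a * x⁻¹))) * qp q (q * a⁻¹ * x)) * h3

lemma latTerm_eq_prod (k : ℕ) (x : ℂ) (m : ℤ) :
    latTerm q a b k x m = (∏ j, (q ^ tri m * x ^ m * (qp q (q * (a j)⁻¹ * (x * q ^ m)) *
      qp q (q * (b j)⁻¹ * (x * q ^ m)⁻¹)))) * (x * q ^ m) ^ k := by
  have h : ∀ (c : ℂ) (F : Fin N → ℂ), ∏ j, c * F j = c ^ N * ∏ j, F j := fun c F => by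
    rw [prod_mul_distrib, prod_const, card_univ, Fintype.card_fin]
  rw [h, latTerm, weight, mul_pow, mul_comm (N : ℤ), mul_comm (N : ℤ), zpow_mul, zpow_mul,
    zpow_natCast, zpow_natCast]
  ring

/-- Geometric bound for the terms of `latSum`, uniform on `ρ⁻¹ ≤ |x| ≤ ρ`. -/
lemma exists_latTerm_bound (hq0 : q ≠ 0) (hq : ‖q‖ < 1) (ha : ∀ i, a i ≠ 0) (hb : ∀ i, b i ≠ 0)
    {r : ℝ} (hr : 0 < r) (k : Fin N) (ρ : ℝ) :
    ∃ C : ℝ, 0 ≤ C ∧ ∀ x : ℂ, x ≠ 0 → ‖x‖ ≤ ρ → ‖x⁻¹‖ ≤ ρ → ∀ m : ℤ,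
      r ^ m * ‖latTerm q a b k x m‖ ≤
        C * ((r / ‖∏ i, b i‖) ^ m.natAbs + (‖q‖ / (r * ‖∏ i, a i‖)) ^ m.natAbs) := by
  have hqn : 0 < ‖q‖ := norm_pos_iff.2 hq0
  have hq1 : 0 < 1 - ‖q‖ := by linarith
  set E : Fin N → ℝ := fun j =>
    Real.exp ((‖a j‖ + ‖(a j)⁻¹‖ + ‖b j‖ + ‖(b j)⁻¹‖) * ρ / (1 - ‖q‖)) with hE
  have hE0 : ∀ j, 0 < E j := fun j => Real.exp_pos _
  rcases le_or_gt ρ 0 with hρ | hρ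
  · refine ⟨0, le_rfl, fun x hx hx1 => ?_⟩
    exact absurd (norm_pos_iff.2 hx) (by linarith)
  refine ⟨ρ ^ (k : ℕ) * ∏ j, E j ^ 3, by positivity, fun x hx hx1 hx2 m => ?_⟩
  have hA : ∀ j, ‖a j * x⁻¹‖ ≤ ‖a j‖ * ρ := fun j => by rw [norm_mul]; gcongr
  have hA' : ∀ j, ‖q * (a j)⁻¹ * x‖ ≤ ‖(a j)⁻¹‖ * ρ := fun j => by
    rw [norm_mul, norm_mul]
    gcongr
    exact mul_le_of_le_one_left (norm_nonneg _) hq.le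
  have hB : ∀ j, ‖b j * x‖ ≤ ‖b j‖ * ρ := fun j => by rw [norm_mul]; gcongr
  have hB' : ∀ j, ‖q * (b j)⁻¹ * x⁻¹‖ ≤ ‖(b j)⁻¹‖ * ρ := fun j => by
    rw [norm_mul, norm_mul]
    gcongr
    exact mul_le_of_le_one_left (norm_nonneg _) hq.le
  have hle : ∀ j (t : ℝ), t ≤ (‖a j‖ + ‖(a j)⁻¹‖ + ‖b j‖ + ‖(b j)⁻¹‖) * ρ →
      Real.exp (t / (1 - ‖q‖)) ≤ E j := fun j t ht => by
    refine Real.exp_le_exp.2 ?_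
    gcongr
  have hn : ∀ j, 0 ≤ ‖a j‖ * ρ ∧ 0 ≤ ‖(a j)⁻¹‖ * ρ ∧ 0 ≤ ‖b j‖ * ρ ∧ 0 ≤ ‖(b j)⁻¹‖ * ρ :=
    fun j => ⟨by positivity, by positivity, by positivity, by positivity⟩
  have hsmall : ∀ (u : ℂ) (t : ℝ) (l : ℕ), ‖u‖ ≤ t → ‖q ^ l * u‖ ≤ t := fun u t l hu => by
    rw [norm_mul, norm_pow]
    exact (mul_le_of_le_one_left (norm_nonneg _) (pow_le_one₀ (norm_nonneg _) hq.le)).trans hu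
  obtain ⟨l, rfl | rfl⟩ := m.eq_nat_or_neg
  · have hfac : ∀ j, ‖q ^ tri l * x ^ (l : ℤ) * (qp q (q * (a j)⁻¹ * (x * q ^ (l : ℤ))) *
        qp q (q * (b j)⁻¹ * (x * q ^ (l : ℤ))⁻¹))‖ ≤ E j ^ 3 * (‖b j‖⁻¹) ^ l := by
      intro j
      rw [mul_left_comm, qp_shift_pos hq0 hq (hb j) hx, norm_mul, norm_mul, norm_mul, norm_pow,
        norm_neg, norm_inv]
      have e1 : ‖qp q (q * (a j)⁻¹ * (x * q ^ (l : ℤ)))‖ ≤ E j := by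
        refine (norm_qp_le hq _).trans (hle j _ ?_)
        rw [zpow_natCast, show q * (a j)⁻¹ * (x * q ^ l) = q ^ l * (q * (a j)⁻¹ * x) by ring]
        have := hsmall _ _ l (hA' j)
        linarith [(hn j).1, (hn j).2.2.1, (hn j).2.2.2]
      have e2 : ‖∏ i ∈ range l, (1 - q ^ i * (b j * x))‖ ≤ E j := by
        refine (norm_qp_prod_le hq _ _).trans (hle j _ ?_)
        linarith [(hn j).1, (hn j).2.1, (hn j).2.2.2, hB j]
      have e3 : ‖qp q (q * (b j)⁻¹ * x⁻¹)‖ ≤ E j := by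
        refine (norm_qp_le hq _).trans (hle j _ ?_)
        linarith [(hn j).1, (hn j).2.1, (hn j).2.2.1, hB' j]
      have := (hE0 j).le
      calc _ ≤ E j * ((‖b j‖⁻¹) ^ l * E j * E j) := by gcongr
        _ = _ := by ring
    have hpow : ‖(x * q ^ (l : ℤ)) ^ (k : ℕ)‖ ≤ ρ ^ (k : ℕ) := by
      rw [norm_pow]
      gcongr
      rw [zpow_natCast, mul_comm]
      exact hsmall x ρ l hx1
    rw [latTerm_eq_prod, norm_mul, norm_prod, Int.natAbs_natCast, zpow_natCast]
    calc r ^ l * ((∏ j, ‖_‖) * ‖_‖) ≤ r ^ l * ((∏ j, E j ^ 3 * (‖b j‖⁻¹) ^ l) * ρ ^ (k : ℕ)) := by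
          gcongr with j
          exact hfac j
      _ = ρ ^ (k : ℕ) * (∏ j, E j ^ 3) * (r / ‖∏ i, b i‖) ^ l := by
          simp only [prod_mul_distrib, prod_pow, prod_inv_distrib, norm_prod, div_eq_mul_inv,
            mul_pow, inv_pow]
          ring
      _ ≤ _ := by
          gcongr
          exact le_add_of_nonneg_right (by positivity)
  · have hfac : ∀ j, ‖q ^ tri (-l) * x ^ (-l : ℤ) * (qp q (q * (a j)⁻¹ * (x * q ^ (-l : ℤ))) *
        qp q (q * (b j)⁻¹ * (x * q ^ (-l : ℤ))⁻¹))‖ ≤ E j ^ 3 * (‖q‖ * ‖a j‖⁻¹) ^ l := by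
      intro j
      rw [← mul_assoc, qp_shift_neg hq0 hq (ha j) hx, norm_mul, norm_mul, norm_mul, norm_pow,
        norm_neg, norm_mul, norm_inv]
      have e1 : ‖qp q (q * (b j)⁻¹ * (x * q ^ (-l : ℤ))⁻¹)‖ ≤ E j := by
        refine (norm_qp_le hq _).trans (hle j _ ?_)
        rw [zpow_neg, zpow_natCast, mul_inv, inv_inv,
          show q * (b j)⁻¹ * (x⁻¹ * q ^ l) = q ^ l * (q * (b j)⁻¹ * x⁻¹) by ring]
        have := hsmall _ _ l (hB' j)
        linarith [(hn j).1, (hn j).2.1, (hn j).2.2.1]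
      have e2 : ‖∏ i ∈ range l, (1 - q ^ i * (a j * x⁻¹))‖ ≤ E j := by
        refine (norm_qp_prod_le hq _ _).trans (hle j _ ?_)
        linarith [(hn j).2.1, (hn j).2.2.1, (hn j).2.2.2, hA j]
      have e3 : ‖qp q (q * (a j)⁻¹ * x)‖ ≤ E j := by
        refine (norm_qp_le hq _).trans (hle j _ ?_)
        linarith [(hn j).1, (hn j).2.2.1, (hn j).2.2.2, hA' j]
      have := (hE0 j).le
      calc _ ≤ (‖q‖ * ‖a j‖⁻¹) ^ l * E j * E j * E j := by gcongr
        _ = _ := by ring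
    have hpow : ‖(x * q ^ (-l : ℤ)) ^ (k : ℕ)‖ ≤ ρ ^ (k : ℕ) * ((‖q‖ ^ l)⁻¹) ^ (k : ℕ) := by
      rw [norm_pow, ← mul_pow, norm_mul, zpow_neg, zpow_natCast, norm_inv, norm_pow]
      gcongr
    have hqk : ‖q‖ ^ N * (‖q‖⁻¹) ^ (k : ℕ) ≤ ‖q‖ := by
      obtain ⟨e, he⟩ : ∃ e, N = e + 1 + (k : ℕ) := ⟨N - 1 - k, by have := k.2; omega⟩
      have hN : ‖q‖ ^ N = ‖q‖ ^ e * ‖q‖ * ‖q‖ ^ (k : ℕ) := by rw [← pow_succ, ← pow_add, ← he]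
      calc ‖q‖ ^ N * (‖q‖⁻¹) ^ (k : ℕ) = ‖q‖ ^ e * ‖q‖ := by
            rw [hN, inv_pow]
            field_simp
        _ ≤ 1 * ‖q‖ := by gcongr; exact pow_le_one₀ hqn.le hq.le
        _ = _ := one_mul _
    rw [latTerm_eq_prod, norm_mul, norm_prod, Int.natAbs_neg, Int.natAbs_natCast, zpow_neg,
      zpow_natCast]
    calc (r ^ l)⁻¹ * ((∏ j, ‖_‖) * ‖_‖)
        ≤ (r ^ l)⁻¹ * ((∏ j, E j ^ 3 * (‖q‖ * ‖a j‖⁻¹) ^ l) *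
            (ρ ^ (k : ℕ) * ((‖q‖ ^ l)⁻¹) ^ (k : ℕ))) := by
          gcongr with j
          exact hfac j
      _ = ρ ^ (k : ℕ) * (∏ j, E j ^ 3) *
            ((‖q‖ ^ N * (‖q‖⁻¹) ^ (k : ℕ)) * (r * ‖∏ i, a i‖)⁻¹) ^ l := by
          simp only [prod_mul_distrib, prod_pow, prod_inv_distrib, norm_prod, prod_const,
            card_univ, Fintype.card_fin, mul_pow, mul_inv, inv_pow]
          ring
      _ ≤ ρ ^ (k : ℕ) * (∏ j, E j ^ 3) * (‖q‖ / (r * ‖∏ i, a i‖)) ^ l := by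
          rw [div_eq_mul_inv]
          gcongr
      _ ≤ _ := by
          gcongr
          exact le_add_of_nonneg_left (by positivity)

lemma summable_pow_natAbs {c : ℝ} (h0 : 0 ≤ c) (h1 : c < 1) :
    Summable fun m : ℤ => c ^ m.natAbs := by
  refine Summable.of_nat_of_neg ?_ ?_ <;> simpa using summable_geometric_of_lt_one h0 h1

/-- Absolute convergence of `latSum` in the annulus `|q| / |∏ a_i| < |w| < |∏ b_i|`. -/
lemma summable_latTerm (hq0 : q ≠ 0) (hq : ‖q‖ < 1) (ha : ∀ i, a i ≠ 0) (hb : ∀ i, b i ≠ 0)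
    {r : ℝ} (hr : 0 < r) (hr1 : r < ‖∏ i, b i‖) (hr2 : ‖q‖ < r * ‖∏ i, a i‖) (k : Fin N)
    {x : ℂ} (hx : x ≠ 0) : Summable fun m : ℤ => r ^ m * ‖latTerm q a b k x m‖ := by
  obtain ⟨C, hC, h⟩ := exists_latTerm_bound hq0 hq ha hb hr k (max ‖x‖ ‖x⁻¹‖)
  refine Summable.of_nonneg_of_le (fun m => by positivity)
    (h x hx (le_max_left _ _) (le_max_right _ _)) (Summable.mul_left _ ?_)
  exact (summable_pow_natAbs (by positivity) ((div_lt_one (by linarith)).2 hr1)).add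
    (summable_pow_natAbs (by positivity) ((div_lt_one (by linarith [norm_nonneg q])).2 hr2))

lemma differentiableOn_latTerm (hq0 : q ≠ 0) (hq : ‖q‖ < 1) (k : ℕ) (m : ℤ) :
    DifferentiableOn ℂ (fun x => latTerm q a b k x m) {0}ᶜ := by
  intro x hx
  have hx0 : x ≠ 0 := hx
  refine DifferentiableAt.differentiableWithinAt ?_
  unfold latTerm weight
  have hd := differentiable_qp hq
  refine DifferentiableAt.mul (DifferentiableAt.mul (by fun_prop)
    (differentiableAt_zpow.2 (Or.inl hx0))) (DifferentiableAt.mul ?_ (by fun_prop))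
  refine DifferentiableAt.fun_finsetProd fun j _ => DifferentiableAt.mul ?_ ?_
  · exact DifferentiableAt.comp (g := qp q) x (hd _) (by fun_prop)
  · refine DifferentiableAt.comp (g := qp q) x (hd _) ?_
    have : x * q ^ m ≠ 0 := mul_ne_zero hx0 (zpow_ne_zero _ hq0)
    fun_prop (disch := assumption)

lemma differentiableOn_latSum (hq0 : q ≠ 0) (hq : ‖q‖ < 1) (ha : ∀ i, a i ≠ 0)
    (hb : ∀ i, b i ≠ 0) (hw : w ≠ 0) (hr1 : ‖w‖ < ‖∏ i, b i‖) (hr2 : ‖q‖ < ‖w‖ * ‖∏ i, a i‖)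
    (k : Fin N) : DifferentiableOn ℂ (latSum q a b w k) {0}ᶜ := by
  intro x hx
  have hx0 : x ≠ 0 := hx
  have hr : 0 < ‖w‖ := norm_pos_iff.2 hw
  set ρ := max ‖x‖ ‖x⁻¹‖ + 1 with hρ
  set U : Set ℂ := {0}ᶜ ∩ (fun y : ℂ => ‖y‖) ⁻¹' Set.Iio ρ ∩ (fun y : ℂ => ‖y‖) ⁻¹' Set.Ioi ρ⁻¹
    with hU
  have hρ0 : 0 < ρ := by positivity
  have hUo : IsOpen U := (isOpen_compl_singleton.inter (isOpen_Iio.preimage continuous_norm)).inter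
    (isOpen_Ioi.preimage continuous_norm)
  have hxU : x ∈ U := by
    refine ⟨⟨hx, ?_⟩, ?_⟩
    · show ‖x‖ < ρ
      exact (le_max_left ‖x‖ ‖x⁻¹‖).trans_lt (lt_add_one (max ‖x‖ ‖x⁻¹‖))
    · have : ‖x⁻¹‖ < ρ := (le_max_right ‖x‖ ‖x⁻¹‖).trans_lt (lt_add_one (max ‖x‖ ‖x⁻¹‖))
      rw [norm_inv] at this
      exact inv_lt_of_inv_lt₀ (norm_pos_iff.2 hx0) this
  obtain ⟨C, hC, h⟩ := exists_latTerm_bound hq0 hq ha hb hr k ρ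
  refine ((Complex.differentiableOn_tsum_of_summable_norm (U := U) (F := fun m x => w ^ m *
    latTerm q a b k x m) (u := fun m : ℤ => C * ((‖w‖ / ‖∏ i, b i‖) ^ m.natAbs +
      (‖q‖ / (‖w‖ * ‖∏ i, a i‖)) ^ m.natAbs)) ?_ (fun m => ?_) hUo
    (fun m y hy => ?_)).differentiableAt (hUo.mem_nhds hxU)).differentiableWithinAt
  · refine Summable.mul_left _ ?_
    exact (summable_pow_natAbs (by positivity) ((div_lt_one (by linarith)).2 hr1)).add
      (summable_pow_natAbs (by positivity) ((div_lt_one (by linarith [norm_nonneg q])).2 hr2))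
  · exact ((differentiableOn_latTerm hq0 hq k m).mono fun y hy => hy.1.1).const_mul _
  · rw [norm_mul, norm_zpow]
    refine h y hy.1.1 hy.1.2.le ?_ m
    rw [norm_inv]
    exact (inv_lt_of_inv_lt₀ hρ0 hy.2).le

end OneDimensional

/-! ### Multiple series and constant terms -/

section MultipleSums

lemma prod_zpow_sum {N : ℕ} {w : ℂ} (hw : w ≠ 0) (s : Finset (Fin N)) (ν : Fin N → ℤ) :
    ∏ i ∈ s, w ^ ν i = w ^ (∑ i ∈ s, ν i) := by
  induction s using Finset.induction_on with
  | empty => simp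
  | insert i s hi ih => rw [prod_insert hi, sum_insert hi, zpow_add₀ hw, ih]

/-- A product of finitely many absolutely convergent series is the multiple series of products. -/
lemma tsum_pi_prod {N : ℕ} (F : Fin N → ℤ → ℂ) (hF : ∀ i, Summable fun m => ‖F i m‖) :
    (Summable fun ν : Fin N → ℤ => ‖∏ i, F i (ν i)‖) ∧
      ∑' ν : Fin N → ℤ, ∏ i, F i (ν i) = ∏ i, ∑' m, F i m := by
  induction N with
  | zero =>
    refine ⟨(hasSum_fintype _).summable, ?_⟩
    rw [tsum_fintype]
    simp
  | succ N ih =>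
    obtain ⟨h1, h2⟩ := ih (fun i => F i.succ) fun i => hF i.succ
    have e1 : ∀ p : ℤ × (Fin N → ℤ), ∏ i, F i (Fin.consEquiv (fun _ => ℤ) p i) =
        F 0 p.1 * ∏ i : Fin N, F i.succ (p.2 i) := fun p => by
      rw [Fin.prod_univ_succ]
      simp [Fin.consEquiv]
    constructor
    · rw [← (Fin.consEquiv fun _ : Fin (N + 1) => ℤ).summable_iff]
      refine (Summable.mul_norm (hF 0) h1).congr fun p => ?_
      rw [Function.comp_apply, e1]
    · rw [← (Fin.consEquiv fun _ : Fin (N + 1) => ℤ).tsum_eq, tsum_congr e1,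
        ← tsum_mul_tsum_of_summable_norm (hF 0) h1, h2, Fin.prod_univ_succ]

/-- If the Laurent series `∑ w^{s(i)} c_i` vanishes on a circle `|w| = r`, its constant term is
zero. -/
lemma tsum_constant_term_eq_zero {ι : Type*} [Countable ι] (s : ι → ℤ) (c : ι → ℂ) {r : ℝ}
    (hr : 0 < r) (hsum : Summable fun i => r ^ s i * ‖c i‖)
    (h : ∀ w : ℂ, ‖w‖ = r → ∑' i, w ^ s i * c i = 0) :
    ∑' i, (if s i = 0 then c i else 0) = 0 := by
  set g : ι → ℝ → ℂ := fun i φ => (r * Complex.exp (φ * Complex.I)) ^ s i * c i with hg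
  have hnorm : ∀ φ : ℝ, ‖(r : ℂ) * Complex.exp (φ * Complex.I)‖ = r := fun φ => by
    rw [norm_mul, Complex.norm_exp_ofReal_mul_I, mul_one, Complex.norm_real,
      Real.norm_of_nonneg hr.le]
  have hcont : ∀ i, Continuous (g i) := fun i => by
    refine Continuous.mul (Continuous.zpow₀ (by fun_prop) _ fun φ => Or.inl ?_) continuous_const
    rw [← norm_pos_iff, hnorm]
    exact hr
  have hgn : ∀ i φ, ‖g i φ‖ = r ^ s i * ‖c i‖ := fun i φ => by
    rw [hg]
    simp only [norm_mul _ (c i), norm_zpow, hnorm]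
  have hgint : ∀ i, ∫ φ in (0 : ℝ)..2 * Real.pi, g i φ =
      2 * Real.pi * (if s i = 0 then c i else 0) := fun i => by
    have e : ∀ φ : ℝ, g i φ = (r : ℂ) ^ s i * c i *
        Complex.exp ((s i * Complex.I) * φ) := fun φ => by
      rw [hg]
      simp only [mul_zpow, ← Complex.exp_int_mul]
      ring_nf
    simp only [e]
    split_ifs with hs
    · simp [hs]
    · have h0 : (s i : ℂ) * Complex.I ≠ 0 := mul_ne_zero (Int.cast_ne_zero.2 hs) Complex.I_ne_zero
      rw [intervalIntegral.integral_const_mul, integral_exp_mul_complex h0]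
      have : (s i : ℂ) * Complex.I * ((2 * Real.pi : ℝ) : ℂ) = s i * (2 * Real.pi * Complex.I) := by
        push_cast; ring
      rw [this, Complex.exp_int_mul_two_pi_mul_I]
      simp
  have key := intervalIntegral.hasSum_integral_of_dominated_convergence (a := 0) (b := 2 * Real.pi)
    (μ := MeasureTheory.volume) (F := g) (f := fun _ => 0) (fun i _ => r ^ s i * ‖c i‖)
    (fun i => (hcont i).aestronglyMeasurable)
    (fun i => Filter.Eventually.of_forall fun φ _ => (hgn i φ).le)
    (Filter.Eventually.of_forall fun φ _ => hsum)
    (by simp)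
    (Filter.Eventually.of_forall fun φ _ => by
      rw [← h _ (hnorm φ)]
      exact (Summable.of_norm (hsum.congr fun i => (hgn i φ).symm)).hasSum)
  simp only [hgint, intervalIntegral.integral_zero] at key
  have := key.tsum_eq
  rw [tsum_mul_left] at this
  exact (mul_eq_zero.1 this).resolve_left (by simp [Real.pi_ne_zero])

end MultipleSums

section Assembly

variable {q : ℂ} {N : ℕ} {a b : Fin N → ℂ}

/-- The determinant with rows `(latTerm k (x i) (ν i))_k`: up to the factor `bigTheta q x`, the
summand of the multiple sum at the lattice point `(x_i q^{ν_i})_i`. -/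
noncomputable def latDet (q : ℂ) (a b : Fin N → ℂ) (x : Fin N → ℂ) (ν : Fin N → ℤ) : ℂ :=
  (Matrix.of fun i k : Fin N => latTerm q a b k (x i) (ν i)).det

/-- Laurent expansion in `w` of the determinant of the functions `latSum`. -/
lemma hasSum_latDet (hq0 : q ≠ 0) (hq : ‖q‖ < 1) (ha : ∀ i, a i ≠ 0) (hb : ∀ i, b i ≠ 0)
    {w : ℂ} (hw : w ≠ 0) (hr1 : ‖w‖ < ‖∏ i, b i‖) (hr2 : ‖q‖ < ‖w‖ * ‖∏ i, a i‖)
    {x : Fin N → ℂ} (hx : ∀ i, x i ≠ 0) :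
    HasSum (fun ν : Fin N → ℤ => w ^ (∑ i, ν i) * latDet q a b x ν)
      (ptDet (fun k : Fin N => latSum q a b w k) x) := by
  have hexp : ∀ ν : Fin N → ℤ, w ^ (∑ i, ν i) * latDet q a b x ν =
      ∑ σ : Equiv.Perm (Fin N), ((Equiv.Perm.sign σ : ℤ) : ℂ) *
        ∏ i, (w ^ ν i * latTerm q a b (σ i) (x i) (ν i)) := fun ν => by
    rw [latDet, ← Matrix.det_transpose, Matrix.det_apply', mul_sum]
    refine sum_congr rfl fun σ _ => ?_
    rw [prod_mul_distrib]
    rw [prod_zpow_sum hw]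
    simp only [Matrix.transpose_apply, Matrix.of_apply]
    ring
  rw [ptDet, ← Matrix.det_transpose, Matrix.det_apply']
  simp only [hexp]
  refine hasSum_sum fun σ _ => HasSum.mul_left _ ?_
  have := tsum_pi_prod (fun i m => w ^ m * latTerm q a b (σ i) (x i) m) fun i => by
    simp only [norm_mul, norm_zpow]
    exact summable_latTerm hq0 hq ha hb (norm_pos_iff.2 hw) hr1 hr2 (σ i) (hx i)
  simp only [Matrix.transpose_apply, Matrix.of_apply, latSum]
  rw [← this.2]
  exact (Summable.of_norm this.1).hasSum

/-- The constant term in `w` of the proportionality `ptDet_mul_bigTheta`. -/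
lemma constant_term_proportional (hq0 : q ≠ 0) (hq : ‖q‖ < 1) (ha : ∀ i, a i ≠ 0)
    (hb : ∀ i, b i ≠ 0) (hbal : ‖q‖ < ‖(∏ i, a i) * ∏ i, b i‖) {x y : Fin N → ℂ}
    (hx : QDistinct q x) (hy : QDistinct q y) (hxy : ∏ i, x i = ∏ i, y i) :
    (∑' ν : Fin N → ℤ, if ∑ i, ν i = 0 then latDet q a b x ν else 0) * bigTheta q y =
      (∑' ν : Fin N → ℤ, if ∑ i, ν i = 0 then latDet q a b y ν else 0) * bigTheta q x := by
  have hA : 0 < ‖∏ i, a i‖ := norm_pos_iff.2 (prod_ne_zero_iff.2 fun i _ => ha i)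
  have hqn : 0 < ‖q‖ := norm_pos_iff.2 hq0
  have hX : 0 < ‖∏ i, x i‖ := norm_pos_iff.2 (prod_ne_zero_iff.2 fun i _ => hx.1 i)
  -- a circle in the annulus of convergence avoiding the zeros of `θ(w ∏ (-x_i))`
  obtain ⟨r, hr, hr2, hr1⟩ := ((Set.countable_range
    (fun m : ℤ => ‖q‖ ^ m / ‖∏ i, x i‖)).dense_compl ℝ).exists_between
      (show ‖q‖ / ‖∏ i, a i‖ < ‖∏ i, b i‖ by
        rwa [div_lt_iff₀ hA, ← norm_mul, mul_comm])
  have hr0 : 0 < r := lt_trans (by positivity) hr2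
  rw [div_lt_iff₀ hA] at hr2
  have hadm : ∀ (w : ℂ), ‖w‖ = r → ∀ z : Fin N → ℂ, QDistinct q z → ∏ i, z i = ∏ i, x i →
      Admissible q w z := fun w hw z hz hzx => ⟨hz, fun m hm => hr ⟨m, ?_⟩⟩
  swap
  · have := congrArg norm hm
    simp only [norm_mul, norm_prod, norm_neg, norm_zpow, hw] at this
    rw [← norm_prod, hzx] at this
    simp only
    rw [← this]
    field_simp
  have hs : ∀ (w : ℂ), ‖w‖ = r → ∀ z : Fin N → ℂ, QDistinct q z →
      HasSum (fun ν : Fin N → ℤ => w ^ (∑ i, ν i) * latDet q a b z ν)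
        (ptDet (fun k : Fin N => latSum q a b w k) z) := fun w hw z hz =>
    hasSum_latDet hq0 hq ha hb (norm_pos_iff.1 (hw ▸ hr0)) (hw ▸ hr1) (hw ▸ hr2) hz.1
  have hrn : ‖(r : ℂ)‖ = r := by rw [Complex.norm_real, Real.norm_of_nonneg hr0.le]
  have hzero := tsum_constant_term_eq_zero (fun ν : Fin N → ℤ => ∑ i, ν i)
    (fun ν => latDet q a b x ν * bigTheta q y - latDet q a b y ν * bigTheta q x) hr0 ?_ ?_
  · have hs0 : ∀ z : Fin N → ℂ, QDistinct q z → Summable fun ν : Fin N → ℤ =>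
        if ∑ i, ν i = 0 then latDet q a b z ν else 0 := fun z hz => by
      refine Summable.of_norm (Summable.of_nonneg_of_le (fun _ => norm_nonneg _) (fun ν => ?_)
        (hs r hrn z hz).summable.norm)
      split_ifs with h
      · simp [h]
      · rw [norm_zero]
        exact norm_nonneg _
    rw [← sub_eq_zero, ← tsum_mul_right, ← tsum_mul_right,
      ← ((hs0 x hx).mul_right _).tsum_sub ((hs0 y hy).mul_right _)]
    refine Eq.trans (tsum_congr fun ν => ?_) hzero
    split_ifs
    · rfl
    · rw [zero_mul, zero_mul, sub_zero]
  · refine (((hs r hrn x hx).mul_right (bigTheta q y)).sub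
      ((hs r hrn y hy).mul_right (bigTheta q x))).summable.norm.congr fun ν => ?_
    have : r ^ (∑ i, ν i) = ‖(r : ℂ) ^ (∑ i, ν i)‖ := by rw [norm_zpow, hrn]
    rw [this, ← norm_mul]
    congr 1
    ring
  · intro w hw
    have hw0 : w ≠ 0 := norm_pos_iff.1 (hw ▸ hr0)
    have := ((hs w hw x hx).mul_right (bigTheta q y)).sub
      ((hs w hw y hy).mul_right (bigTheta q x))
    rw [ptDet_mul_bigTheta hq0 hq hw0
      (fun k => differentiableOn_latSum hq0 hq ha hb hw0 (hw ▸ hr1) (hw ▸ hr2) k)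
      (fun k z hz => latSum_mul_q hq0 hw0 k hz) (hadm w hw x hx rfl)
      (hadm w hw y hy hxy.symm) hxy, sub_self] at this
    rw [← this.tsum_eq]
    refine tsum_congr fun ν => ?_
    ring

end Assembly

/-! ### The Gustafson sum -/

section Gustafson

variable {q d : ℂ} {n : ℕ}

/-- The base point completed by the coordinate `d / ∏ x_k`. -/
noncomputable def fullPt (d : ℂ) (x : Fin n → ℂ) : Fin (n + 1) → ℂ :=
  Fin.snoc x (d * (∏ k, x k)⁻¹)

/-- The exponent vector completed so that its entries sum to zero. -/
def fullExp (ν : Fin n → ℤ) : Fin (n + 1) → ℤ := Fin.snoc ν (-∑ k, ν k)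

lemma prod_fullPt {x : Fin n → ℂ} (hx : ∀ i, x i ≠ 0) : ∏ i, fullPt d x i = d := by
  have : ∏ k, x k ≠ 0 := prod_ne_zero_iff.2 fun i _ => hx i
  rw [Fin.prod_univ_castSucc]
  simp only [fullPt, Fin.snoc_castSucc, Fin.snoc_last]
  field_simp

lemma sum_fullExp (ν : Fin n → ℤ) : ∑ i, fullExp ν i = 0 := by
  rw [Fin.sum_univ_castSucc]
  simp [fullExp]

lemma gz_eq (hq0 : q ≠ 0) (x : Fin n → ℂ) (ν : Fin n → ℤ) :
    gz q d x ν = fun i => fullPt d x i * q ^ fullExp ν i := by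
  funext i
  refine Fin.lastCases ?_ (fun i => ?_) i
  · simp only [gz, fullPt, fullExp, Fin.snoc_last]
    rw [prod_mul_distrib, prod_zpow_sum hq0, zpow_neg, mul_inv]
    ring
  · simp only [gz, fullPt, fullExp, Fin.snoc_castSucc]

lemma qDistinct_fullPt (hd : d ≠ 0) {x : Fin n → ℂ} (hx : ∀ i, x i ≠ 0)
    (hxx : ∀ i j, i < j → ∀ m : ℤ, x i / x j ≠ q ^ m)
    (hxd : ∀ i, ∀ m : ℤ, x i * (∏ k, x k) * d⁻¹ ≠ q ^ m) : QDistinct q (fullPt d x) := by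
  have hP : ∏ k, x k ≠ 0 := prod_ne_zero_iff.2 fun i _ => hx i
  have hlt : ∀ i j, i < j → ∀ m : ℤ, fullPt d x i / fullPt d x j ≠ q ^ m := by
    intro i j
    refine Fin.lastCases (fun h => ?_) (fun i => ?_) i
    · exact absurd h (Fin.le_last j).not_gt
    · refine Fin.lastCases (fun _ m => ?_) (fun j h m => ?_) j
      · simp only [fullPt, Fin.snoc_castSucc, Fin.snoc_last]
        convert hxd i m using 1
        field_simp
      · simp only [fullPt, Fin.snoc_castSucc]
        exact hxx i j (Fin.castSucc_lt_castSucc_iff.1 h) m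
  refine ⟨fun i => ?_, fun i j hij m => ?_⟩
  · refine Fin.lastCases ?_ (fun i => ?_) i
    · simp [fullPt, hd, hP]
    · simpa [fullPt] using hx i
  · rcases lt_or_gt_of_ne hij with h | h
    · exact hlt i j h m
    · intro hm
      refine hlt j i h (-m) ?_
      rw [zpow_neg, ← hm, inv_div]

/-- `bigTheta` is the Vandermonde determinant times the denominator of the Gustafson sum. -/
lemma bigTheta_eq_vandermonde {N : ℕ} (hq : ‖q‖ < 1) {z : Fin N → ℂ} (hz : ∀ i, z i ≠ 0) :
    bigTheta q z = (Matrix.vandermonde z).det *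
      ∏ i, ∏ j ∈ Ioi i, qp q (q * z i / z j) * qp q (q * z j / z i) := by
  rw [Matrix.det_vandermonde, bigTheta, ← prod_mul_distrib]
  refine prod_congr rfl fun i _ => ?_
  rw [← prod_mul_distrib]
  refine prod_congr rfl fun j _ => ?_
  have h1 : q * (z i / z j) = q * z i / z j := by ring
  have h2 : q / (z i / z j) = q * z j / z i := by rw [div_div_eq_mul_div]
  rw [qtheta_eq hq, h1, h2, ← mul_assoc]
  congr 1
  have := hz j
  field_simp

/-- The summand as a determinant: the Vandermonde determinant in the numerator and the one hidden in
`bigTheta` cancel. -/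
lemma gRegTerm_eq (hq0 : q ≠ 0) (hq : ‖q‖ < 1) (a b : Fin (n + 1) → ℂ) {x : Fin n → ℂ}
    (hx : QDistinct q (fullPt d x)) (ν : Fin n → ℤ) :
    gRegTerm q d a b x ν =
      latDet q a b (fullPt d x) (fullExp ν) / bigTheta q (fullPt d x) := by
  set X := fullPt d x with hX
  set μ := fullExp ν with hμ
  set z : Fin (n + 1) → ℂ := fun i => X i * q ^ μ i with hz
  set G : Fin (n + 1) → ℂ := fun i =>
    q ^ (((n + 1 : ℕ) : ℤ) * tri (μ i)) * X i ^ (((n + 1 : ℕ) : ℤ) * μ i) with hG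
  have hz0 : ∀ i, z i ≠ 0 := fun i => mul_ne_zero (hx.1 i) (zpow_ne_zero _ hq0)
  have hshift : bigTheta q z * ∏ i, G i = bigTheta q X := by
    have := bigTheta_shift hq0 hq hx.1 μ
    rwa [hμ, sum_fullExp, ← hμ, zpow_zero, tri_zero, zpow_zero, mul_one, mul_one] at this
  have hdet : latDet q a b X μ =
      (∏ i, G i) * (∏ i, weight q a b (z i)) * (Matrix.vandermonde z).det := by
    rw [← prod_mul_distrib, ← Matrix.det_mul_column, latDet]
    congr 1
    ext i k
    simp only [Matrix.of_apply, Matrix.vandermonde_apply, latTerm, hG, hz]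
    ring
  have hX0 := bigTheta_ne_zero hq hx
  have hV := bigTheta_eq_vandermonde hq hz0
  have hD : ∏ i, ∏ j ∈ Ioi i, qp q (q * z i / z j) * qp q (q * z j / z i) ≠ 0 := fun h => by
    rw [h, mul_zero] at hV
    rw [hV, zero_mul] at hshift
    exact hX0 hshift.symm
  rw [gRegTerm, gz_eq hq0, div_eq_div_iff hD hX0, hdet, ← hshift, hV]
  simp only [weight]
  ring

/-- The Gustafson sum as a constant term: the sum over `ℤⁿ` is the sum over the vectors of total
degree zero in `ℤⁿ⁺¹`. -/
lemma tsum_gRegTerm (hq0 : q ≠ 0) (hq : ‖q‖ < 1) (a b : Fin (n + 1) → ℂ) {x : Fin n → ℂ}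
    (hx : QDistinct q (fullPt d x)) :
    ∑' ν, gRegTerm q d a b x ν =
      (∑' ν : Fin (n + 1) → ℤ, if ∑ i, ν i = 0 then latDet q a b (fullPt d x) ν else 0) /
        bigTheta q (fullPt d x) := by
  have hinj : Function.Injective (fullExp (n := n)) := fun ν μ h => by
    funext i
    have := congrFun h i.castSucc
    simpa [fullExp] using this
  rw [tsum_congr (gRegTerm_eq hq0 hq a b hx), tsum_div_const, ← hinj.tsum_eq]
  · simp only [sum_fullExp, if_true]
  · intro ν hν
    have h0 : ∑ i, ν i = 0 := by
      by_contra h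
      exact hν (if_neg h)
    refine ⟨Fin.init ν, ?_⟩
    rw [Fin.sum_univ_castSucc] at h0
    have : -∑ k, Fin.init ν k = ν (Fin.last n) := by
      simp only [Fin.init]
      linarith
    rw [fullExp, this, Fin.snoc_init_self]

end Gustafson

/-- The regularized Gustafson sum is independent of the base point (Lemma 5.1). -/
theorem gustafson_reg_constant
    (q : ℝ) (hq0 : 0 < q) (hq1 : q < 1) (n : ℕ) (hn : 1 ≤ n)
    (a b : Fin (n + 1) → ℂ) (ha : ∀ i, a i ≠ 0) (hb : ∀ i, b i ≠ 0)
    (d : ℂ) (hd : d ≠ 0)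
    (hbal : (q : ℝ) < ‖(∏ i, a i) * ∏ i, b i‖)
    (x y : Fin n → ℂ) (hx : ∀ i, x i ≠ 0) (hy : ∀ i, y i ≠ 0)
    (hxx : ∀ i j, i < j → ∀ m : ℤ, x i / x j ≠ (q : ℂ) ^ m)
    (hxd : ∀ i, ∀ m : ℤ, x i * (∏ k, x k) * d⁻¹ ≠ (q : ℂ) ^ m)
    (hyy : ∀ i j, i < j → ∀ m : ℤ, y i / y j ≠ (q : ℂ) ^ m)
    (hyd : ∀ i, ∀ m : ℤ, y i * (∏ k, y k) * d⁻¹ ≠ (q : ℂ) ^ m) :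
    gReg (q : ℂ) d a b x = gReg (q : ℂ) d a b y := by
  have hqn : ‖(q : ℂ)‖ = q := by rw [Complex.norm_real, Real.norm_of_nonneg hq0.le]
  have hqc0 : (q : ℂ) ≠ 0 := Complex.ofReal_ne_zero.2 hq0.ne'
  have hqc1 : ‖(q : ℂ)‖ < 1 := by rwa [hqn]
  have hX := qDistinct_fullPt hd hx hxx hxd
  have hY := qDistinct_fullPt hd hy hyy hyd
  have hprod : ∏ i, fullPt d x i = ∏ i, fullPt d y i := by rw [prod_fullPt hx, prod_fullPt hy]
  rw [gReg, gReg, tsum_gRegTerm hqc0 hqc1 a b hX, tsum_gRegTerm hqc0 hqc1 a b hY]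
  congr 1
  rw [div_eq_div_iff (bigTheta_ne_zero hqc1 hX) (bigTheta_ne_zero hqc1 hY)]
  exact constant_term_proportional hqc0 hqc1 ha hb (by rwa [hqn]) hX hY hprod
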